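/- Let U be a squared four-dimensional Bessel process started at 0, τ₁^U := inf{ t ≥ 0 : Ū(t) − U(t) ≥ 1 } with Ū(t) := sup_{s ∈ [0,t]} U(s). Then there exists a standard one-dimensional Brownian motion B (adapted to the time-changed filtration G_r := F_{C(r)} where C is the inverse of A(t) := ∫₀^t U(s) ds) such that U(t) = 2 B(A(t)) + 4t for all t ≥ 0, and moreover E[ B( A(τ₁^U) ) ] = 0; consequently E[ τ₁^U ] = (1/4) E[ U(τ₁^U) ]. -/

import Mathlib

open MeasureTheory ProbabilityTheory Real Set Filter

noncomputable section

variable {Ω : Type*} [MeasurableSpace Ω]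

/-- A standard one-dimensional Brownian motion (indexed by `ℝ`, with the relevant
properties required for nonnegative times): starts at `0`, has continuous paths,
independent increments, and Gaussian increments of variance `t - s`. -/
structure IsStdBM (P : Measure Ω) (B : ℝ → Ω → ℝ) : Prop where
  measurable : ∀ t : ℝ, Measurable (B t)
  start : ∀ ω, B 0 ω = 0
  cont : ∀ ω, Continuous fun t => B t ω
  indep : ∀ (n : ℕ) (t : Fin (n + 1) → ℝ), (∀ i, 0 ≤ t i) → Monotone t →
    iIndepFun
      (fun (i : Fin n) ω => B (t i.succ) ω - B (t i.castSucc) ω) P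
  gauss : ∀ s t : ℝ, 0 ≤ s → s ≤ t →
    P.map (fun ω => B t ω - B s ω) = gaussianReal 0 (Real.toNNReal (t - s))

/-- A standard `d`-dimensional Brownian motion started at `0`: the coordinate
processes are independent standard one-dimensional Brownian motions. -/
structure IsStdBMVec (d : ℕ) (P : Measure Ω) (B : ℝ → Ω → EuclideanSpace ℝ (Fin d)) : Prop where
  coord : ∀ i : Fin d, IsStdBM P (fun t ω => B t ω i)
  indepCoord : iIndepFun
    (fun (i : Fin d) ω => fun t : ℝ => B t ω i) P

/-- Last zero of `W` in `[0,1]`. -/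
def lastZero (W : ℝ → Ω → ℝ) (ω : Ω) : ℝ := sSup {t ∈ Icc (0:ℝ) 1 | W t ω = 0}

/-- `m` is a standard Brownian meander: obtained from a Brownian motion `W` by
`m s = |W (g + s (1 - g))| / √(1 - g)`, where `g` is the last zero of `W` before time `1`. -/
def IsBrownianMeander (P : Measure Ω) (m : ℝ → Ω → ℝ) : Prop :=
  ∃ W : ℝ → Ω → ℝ, IsStdBM P W ∧
    ∀ ω, ∀ s ∈ Icc (0:ℝ) 1,
      m s ω = |W (lastZero W ω + s * (1 - lastZero W ω)) ω| / Real.sqrt (1 - lastZero W ω)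

/-- Running maximum `X̄(t) = sup_{s ∈ [0,t]} X(s)`. -/
def runMax (X : ℝ → Ω → ℝ) (t : ℝ) (ω : Ω) : ℝ := ⨆ s : Icc (0:ℝ) t, X s ω

/-- Maximal drawdown on `[0,T]` : `sup_{s ∈ [0,T]} (X̄(s) - X(s))`. -/
def maxDDOn (X : ℝ → Ω → ℝ) (T : ℝ) (ω : Ω) : ℝ := ⨆ s : Icc (0:ℝ) T, (runMax X s ω - X s ω)

/-- Drawdown time `τ_λ^X := inf {t ≥ 0 : X̄(t) - X(t) ≥ λ}`. -/
def ddTime (lam : ℝ) (X : ℝ → Ω → ℝ) (ω : Ω) : ℝ :=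
  sInf {t | 0 ≤ t ∧ lam ≤ runMax X t ω - X t ω}

/-- Three-dimensional Bessel process built from a 3-dimensional Brownian motion. -/
def bessel3 (β : ℝ → Ω → EuclideanSpace ℝ (Fin 3)) (t : ℝ) (ω : Ω) : ℝ := ‖β t ω‖

/-- Squared four-dimensional Bessel process built from a 4-dimensional Brownian motion. -/
def sqBessel4 (γ : ℝ → Ω → EuclideanSpace ℝ (Fin 4)) (t : ℝ) (ω : Ω) : ℝ := ‖γ t ω‖ ^ 2

end

open scoped ENNReal

set_option linter.unusedSectionVars false

/-! ### Part 1: the past and the increments -/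

/-- The restriction of the path to `[0,t]`. -/
def pastMap {Ω : Type*} (γ : ℝ → Ω → EuclideanSpace ℝ (Fin 4)) (t : ℝ) :
    Ω → Fin 4 → Icc (0:ℝ) t → ℝ := fun ω i s => γ s ω i

/-- The sigma-algebra generated by the path up to time `t`. -/
@[reducible] def pastF {Ω : Type*} (γ : ℝ → Ω → EuclideanSpace ℝ (Fin 4)) (t : ℝ) : MeasurableSpace Ω :=
  MeasurableSpace.comap (pastMap γ t) inferInstance

/-- Increment of the path. -/
def incr {Ω : Type*} (γ : ℝ → Ω → EuclideanSpace ℝ (Fin 4)) (s t : ℝ) (ω : Ω) : Fin 4 → ℝ :=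
  fun i => γ t ω i - γ s ω i

/-- The law of the increments over a time span `h`. -/
noncomputable def gau (h : ℝ) : Measure (Fin 4 → ℝ) :=
  Measure.pi fun _ => gaussianReal 0 h.toNNReal

instance gau_prob (h : ℝ) : IsProbabilityMeasure (gau h) := by
  unfold gau; infer_instance

theorem IsStdBM.isPreBrownianReal {Ω : Type*} [MeasurableSpace Ω] {P : Measure Ω}
    {B : ℝ → Ω → ℝ} (hB : IsStdBM P B) :
    IsPreBrownianReal (fun (t : NNReal) ω => B t ω) P := by
  apply HasIndepIncrements.isPreBrownianReal_of_hasLaw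
  · intro t
    refine ⟨(hB.measurable _).aemeasurable, ?_⟩
    have := hB.gauss 0 t le_rfl t.2
    simpa [hB.start] using this
  · intro n t ht
    exact hB.indep n (fun i => (t i : ℝ)) (fun i => (t i).2) (fun i j hij => by exact_mod_cast ht hij)

theorem IsStdBM.indep_past {Ω : Type*} [MeasurableSpace Ω] {P : Measure Ω}
    {B : ℝ → Ω → ℝ} (hB : IsStdBM P B) {s t : ℝ} (hs : 0 ≤ s) (hst : s ≤ t) :
    IndepFun (fun ω (u : Icc (0:ℝ) s) => B u ω) (fun ω => B t ω - B s ω) P := by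
  have h := (hB.isPreBrownianReal.indepFun_shift ⟨s, hs⟩).symm
  have m1 : Measurable fun (x : Set.Iic (⟨s, hs⟩ : NNReal) → ℝ) (u : Icc (0:ℝ) s) =>
      x ⟨⟨u, u.2.1⟩, u.2.2⟩ := by fun_prop
  have m2 : Measurable fun (x : NNReal → ℝ) => x ⟨t - s, by linarith⟩ := by fun_prop
  have h2 := h.comp m1 m2
  convert h2 using 1
  · rfl
  ext ω
  have e : s + (t - s) = t := by ring
  have : B t ω - B s ω = B (s + (t - s)) ω - B s ω := by rw [e]
  exact this

section
variable {Ω : Type*} [MeasurableSpace Ω] {P : Measure Ω} [IsProbabilityMeasure P]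
    {γ : ℝ → Ω → EuclideanSpace ℝ (Fin 4)}

theorem meas_coord (hγ : IsStdBMVec 4 P γ) (t : ℝ) (i : Fin 4) : Measurable fun ω => γ t ω i :=
  (hγ.coord i).measurable t

theorem meas_incr (hγ : IsStdBMVec 4 P γ) (s t : ℝ) : Measurable (incr γ s t) :=
  measurable_pi_lambda _ fun i => (meas_coord hγ t i).sub (meas_coord hγ s i)

theorem meas_pastMap (hγ : IsStdBMVec 4 P γ) (t : ℝ) : Measurable (pastMap γ t) :=
  measurable_pi_lambda _ fun i => measurable_pi_lambda _ fun s => meas_coord hγ s i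

theorem pastF_le (hγ : IsStdBMVec 4 P γ) (t : ℝ) : pastF γ t ≤ ‹MeasurableSpace Ω› :=
  (meas_pastMap hγ t).comap_le

theorem meas_pastF {s t : ℝ} (hs : 0 ≤ s) (hst : s ≤ t) (i : Fin 4) :
    Measurable[pastF γ t] fun ω => γ s ω i := by
  have h : Measurable fun x : Fin 4 → Icc (0:ℝ) t → ℝ => x i ⟨s, hs, hst⟩ := by fun_prop
  exact h.comp (comap_measurable (pastMap γ t))

theorem pastF_mono {s t : ℝ} (hst : s ≤ t) : pastF γ s ≤ pastF γ t := by
  have : Measurable[pastF γ t] (pastMap γ s) := by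
    refine @measurable_pi_lambda _ _ _ (pastF γ t) _ _ fun i => ?_
    refine @measurable_pi_lambda _ _ _ (pastF γ t) _ _ fun u => ?_
    exact meas_pastF u.2.1 (u.2.2.trans hst) i
  exact this.comap_le

theorem law_past_incr (hγ : IsStdBMVec 4 P γ) {s t : ℝ} (hs : 0 ≤ s) (hst : s ≤ t) :
    P.map (fun ω => (pastMap γ s ω, incr γ s t ω)) = (P.map (pastMap γ s)).prod (gau (t - s)) := by
  have hc : iIndepFun (fun (i : Fin 4) ω =>
      ((fun (u : Icc (0:ℝ) s) => γ u ω i), γ t ω i - γ s ω i)) P :=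
    hγ.indepCoord.comp (fun i x => ((fun u : Icc (0:ℝ) s => x u), x t - x s))
      (fun i => by fun_prop)
  have m1 : ∀ i : Fin 4, Measurable fun ω => (fun (u : Icc (0:ℝ) s) => γ u ω i) :=
    fun i => measurable_pi_lambda _ fun u => meas_coord hγ u i
  have m2 : ∀ i : Fin 4, Measurable fun ω => γ t ω i - γ s ω i :=
    fun i => (meas_coord hγ t i).sub (meas_coord hγ s i)
  have h1 := (iIndepFun_iff_map_fun_eq_pi_map
    (fun i => ((m1 i).prodMk (m2 i)).aemeasurable)).1 hc
  have h2 : ∀ i : Fin 4, P.map (fun ω =>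
      ((fun (u : Icc (0:ℝ) s) => γ u ω i), γ t ω i - γ s ω i)) =
      (P.map fun ω => (fun (u : Icc (0:ℝ) s) => γ u ω i)).prod
        (gaussianReal 0 (t - s).toNNReal) := by
    intro i
    rw [(indepFun_iff_map_prod_eq_prod_map_map (m1 i).aemeasurable (m2 i).aemeasurable).1
      ((hγ.coord i).indep_past hs hst), (hγ.coord i).gauss s t hs hst]
  simp_rw [h2] at h1
  have : ∀ i : Fin 4, IsProbabilityMeasure
      (P.map fun ω => (fun (u : Icc (0:ℝ) s) => γ u ω i)) :=
    fun i => Measure.isProbabilityMeasure_map (m1 i).aemeasurable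
  have h3 := (measurePreserving_arrowProdEquivProdArrow (Icc (0:ℝ) s → ℝ) ℝ (Fin 4)
    (fun i => P.map fun ω => (fun (u : Icc (0:ℝ) s) => γ u ω i))
    (fun i => gaussianReal 0 (t - s).toNNReal)).map_eq
  rw [← h1, Measure.map_map (MeasurableEquiv.measurable _)
    (measurable_pi_lambda _ fun i => (m1 i).prodMk (m2 i))] at h3
  have h4 : P.map (fun ω => (pastMap γ s ω, incr γ s t ω)) =
    (Measure.pi fun i => P.map fun ω => (fun (u : Icc (0:ℝ) s) => γ u ω i)).prod
      (gau (t - s)) := h3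
  have h5 := congrArg (fun m => m.map Prod.fst) h4
  simp only [Measure.map_fst_prod, measure_univ, one_smul] at h5
  rw [Measure.map_map measurable_fst ((meas_pastMap hγ s).prodMk (meas_incr hγ s t))] at h5
  rw [h4, ← h5]
  rfl

theorem law_incr (hγ : IsStdBMVec 4 P γ) {s t : ℝ} (hs : 0 ≤ s) (hst : s ≤ t) :
    P.map (incr γ s t) = gau (t - s) := by
  have h5 := congrArg (fun m => m.map Prod.snd) (law_past_incr hγ hs hst)
  have := Measure.isProbabilityMeasure_map (μ := P) (meas_pastMap hγ s).aemeasurable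
  simp only [Measure.map_snd_prod, measure_univ, one_smul] at h5
  rw [Measure.map_map measurable_snd ((meas_pastMap hγ s).prodMk (meas_incr hγ s t))] at h5
  exact h5

theorem indep_past_incr (hγ : IsStdBMVec 4 P γ) {s t : ℝ} (hs : 0 ≤ s) (hst : s ≤ t)
    {𝓧 : Type*} [MeasurableSpace 𝓧] {X : Ω → 𝓧} (hX : Measurable[pastF γ s] X) :
    IndepFun X (incr γ s t) P := by
  have : IndepFun (pastMap γ s) (incr γ s t) P := by
    rw [indepFun_iff_map_prod_eq_prod_map_map (meas_pastMap hγ s).aemeasurable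
      (meas_incr hγ s t).aemeasurable, law_past_incr hγ hs hst, law_incr hγ hs hst]
  rw [IndepFun_iff_Indep] at this ⊢
  exact indep_of_indep_of_le_left this hX.comap_le

theorem law_prod (hγ : IsStdBMVec 4 P γ) {s t : ℝ} (hs : 0 ≤ s) (hst : s ≤ t)
    {𝓧 : Type*} [MeasurableSpace 𝓧] {X : Ω → 𝓧} (hX : Measurable[pastF γ s] X) :
    P.map (fun ω => (X ω, incr γ s t ω)) = (P.map X).prod (gau (t - s)) := by
  rw [(indepFun_iff_map_prod_eq_prod_map_map (hX.mono (pastF_le hγ s) le_rfl).aemeasurable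
      (meas_incr hγ s t).aemeasurable).1 (indep_past_incr hγ hs hst hX), law_incr hγ hs hst]

end


/-! ### Part 2: moments -/

theorem mulF {Ω : Type*} {m : MeasurableSpace Ω} {f g : Ω → ℝ} (hf : Measurable[m] f)
    (hg : Measurable[m] g) : Measurable[m] fun ω => f ω * g ω := hf.mul hg

theorem powF {Ω : Type*} {m : MeasurableSpace Ω} {f : Ω → ℝ} (hf : Measurable[m] f) (n : ℕ) :
    Measurable[m] fun ω => f ω ^ n := hf.pow_const n

theorem sumF {Ω ι : Type*} {m : MeasurableSpace Ω} {f : ι → Ω → ℝ} (s : Finset ι)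
    (hf : ∀ i ∈ s, Measurable[m] (f i)) :
    Measurable[m] fun ω => ∑ i ∈ s, f i ω := Finset.measurable_fun_sum s hf

/-- Functions with all moments. -/
def ML {Ω : Type*} [MeasurableSpace Ω] (P : Measure Ω) (f : Ω → ℝ) : Prop :=
  ∀ p : ℕ, MemLp f p P

section
variable {Ω : Type*} [MeasurableSpace Ω] {P : Measure Ω} [IsProbabilityMeasure P]

theorem ML.add {f g : Ω → ℝ} (hf : ML P f) (hg : ML P g) : ML P (fun ω => f ω + g ω) :=
  fun p => (hf p).add (hg p)

theorem ML.sub {f g : Ω → ℝ} (hf : ML P f) (hg : ML P g) : ML P (fun ω => f ω - g ω) :=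
  fun p => (hf p).sub (hg p)

theorem ML.const (c : ℝ) : ML P (fun _ => c) := fun p => memLp_const c

theorem ML.mul {f g : Ω → ℝ} (hf : ML P f) (hg : ML P g) : ML P (fun ω => f ω * g ω) := by
  intro p
  have : ENNReal.HolderTriple ((2 * p : ℕ) : ℝ≥0∞) ((2 * p : ℕ) : ℝ≥0∞) (p : ℝ≥0∞) := by
    constructor
    push_cast
    rw [ENNReal.mul_inv (by simp) (by simp), ← add_mul, ENNReal.inv_two_add_inv_two, one_mul]
  exact (hg (2 * p)).mul (hf (2 * p))

theorem ML.sq {f : Ω → ℝ} (hf : ML P f) : ML P (fun ω => f ω ^ 2) := by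
  simpa [pow_two] using hf.mul hf

theorem ML.sum {ι : Type*} (s : Finset ι) {f : ι → Ω → ℝ} (hf : ∀ i ∈ s, ML P (f i)) :
    ML P (fun ω => ∑ i ∈ s, f i ω) :=
  fun p => memLp_finsetSum s fun i hi => hf i hi p

theorem ML.integrable {f : Ω → ℝ} (hf : ML P f) : Integrable f P := by
  have := hf 1
  rw [Nat.cast_one, memLp_one_iff_integrable] at this
  exact this

theorem ML.bdd {f : Ω → ℝ} (hf : Measurable f) (C : ℝ) (hC : ∀ ω, |f ω| ≤ C) : ML P f :=
  fun _ => MemLp.of_bound hf.aestronglyMeasurable C (ae_of_all _ hC)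

theorem ML.indicator {s : Set Ω} (hs : MeasurableSet s) : ML P (s.indicator fun _ => (1:ℝ)) :=
  ML.bdd (measurable_const.indicator hs) 1 fun ω => by
    by_cases h : ω ∈ s <;> simp [h]

variable {γ : ℝ → Ω → EuclideanSpace ℝ (Fin 4)}

theorem U_eq (t : ℝ) (ω : Ω) : sqBessel4 γ t ω = ∑ i, (γ t ω i) ^ 2 := by
  rw [sqBessel4, EuclideanSpace.real_norm_sq_eq]

theorem U_nonneg (t : ℝ) (ω : Ω) : 0 ≤ sqBessel4 γ t ω := by
  unfold sqBessel4; positivity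

theorem U_zero (hγ : IsStdBMVec 4 P γ) (ω : Ω) : sqBessel4 γ 0 ω = 0 := by
  rw [U_eq]
  simp [(hγ.coord _).start ω]

theorem U_cont (hγ : IsStdBMVec 4 P γ) (ω : Ω) : Continuous fun t => sqBessel4 γ t ω := by
  simp_rw [U_eq]
  exact continuous_finsetSum _ fun i _ => ((hγ.coord i).cont ω).pow 2

theorem U_measF {s t : ℝ} (hs : 0 ≤ s) (hst : s ≤ t) :
    Measurable[pastF γ t] (sqBessel4 γ s) := by
  have : sqBessel4 γ s = fun ω => ∑ i, (γ s ω i) ^ 2 := funext fun ω => U_eq s ω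
  rw [this]
  exact sumF _ fun i _ => powF (meas_pastF hs hst i) 2

theorem U_meas (hγ : IsStdBMVec 4 P γ) (s : ℝ) : Measurable (sqBessel4 γ s) := by
  have : sqBessel4 γ s = fun ω => ∑ i, (γ s ω i) ^ 2 := funext fun ω => U_eq s ω
  rw [this]
  exact Finset.measurable_fun_sum _ fun i _ => (meas_coord hγ s i).pow_const 2

/-- Squared norm of an increment. -/
def nsq (x : Fin 4 → ℝ) : ℝ := ∑ i, (x i) ^ 2

theorem nsq_nonneg (x : Fin 4 → ℝ) : 0 ≤ nsq x := Finset.sum_nonneg fun i _ => sq_nonneg _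

theorem meas_nsq : Measurable nsq := by unfold nsq; fun_prop

theorem incr_law1 (hγ : IsStdBMVec 4 P γ) {s t : ℝ} (hs : 0 ≤ s) (hst : s ≤ t) (i : Fin 4) :
    P.map (fun ω => incr γ s t ω i) = gaussianReal 0 (t - s).toNNReal :=
  (hγ.coord i).gauss s t hs hst

theorem ML_incr (hγ : IsStdBMVec 4 P γ) {s t : ℝ} (hs : 0 ≤ s) (hst : s ≤ t) (i : Fin 4) :
    ML P (fun ω => incr γ s t ω i) := by
  intro p
  have h := memLp_id_gaussianReal (μ := 0) (v := (t - s).toNNReal) p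
  rw [← incr_law1 hγ hs hst i] at h
  exact (memLp_map_measure_iff aestronglyMeasurable_id
    ((measurable_pi_apply i).comp (meas_incr hγ s t)).aemeasurable).1 h

theorem ML_coord (hγ : IsStdBMVec 4 P γ) {t : ℝ} (ht : 0 ≤ t) (i : Fin 4) :
    ML P (fun ω => γ t ω i) := by
  have := ML_incr hγ le_rfl ht i
  have e : (fun ω => incr γ 0 t ω i) = fun ω => γ t ω i := by
    ext ω; simp [incr, (hγ.coord i).start ω]
  rwa [e] at this

theorem ML_U (hγ : IsStdBMVec 4 P γ) {t : ℝ} (ht : 0 ≤ t) : ML P (sqBessel4 γ t) := by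
  have : sqBessel4 γ t = fun ω => ∑ i, (γ t ω i) ^ 2 := funext fun ω => U_eq t ω
  rw [this]
  exact ML.sum _ fun i _ => (ML_coord hγ ht i).sq

theorem ML_nsq (hγ : IsStdBMVec 4 P γ) {s t : ℝ} (hs : 0 ≤ s) (hst : s ≤ t) :
    ML P (fun ω => nsq (incr γ s t ω)) := ML.sum _ fun i _ => (ML_incr hγ hs hst i).sq

theorem E_incr (hγ : IsStdBMVec 4 P γ) {s t : ℝ} (hs : 0 ≤ s) (hst : s ≤ t) (i : Fin 4) :
    ∫ ω, incr γ s t ω i ∂P = 0 := by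
  have h := integral_id_gaussianReal (μ := 0) (v := (t - s).toNNReal)
  have hm : Measurable fun ω => incr γ s t ω i :=
    (measurable_pi_apply i).comp (meas_incr hγ s t)
  rw [← incr_law1 hγ hs hst i, integral_map hm.aemeasurable (by fun_prop)] at h
  exact h

theorem E_incr_sq (hγ : IsStdBMVec 4 P γ) {s t : ℝ} (hs : 0 ≤ s) (hst : s ≤ t) (i : Fin 4) :
    ∫ ω, (incr γ s t ω i) ^ 2 ∂P = t - s := by
  have h := variance_id_gaussianReal (μ := 0) (v := (t - s).toNNReal)
  rw [variance_eq_integral aemeasurable_id] at h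
  simp only [id, integral_id_gaussianReal, sub_zero] at h
  have hm : Measurable fun ω => incr γ s t ω i :=
    (measurable_pi_apply i).comp (meas_incr hγ s t)
  rw [← incr_law1 hγ hs hst i, integral_map hm.aemeasurable (by fun_prop), Real.coe_toNNReal _ (by linarith)] at h
  exact h

theorem E_nsq (hγ : IsStdBMVec 4 P γ) {s t : ℝ} (hs : 0 ≤ s) (hst : s ≤ t) :
    ∫ ω, nsq (incr γ s t ω) ∂P = 4 * (t - s) := by
  unfold nsq
  rw [integral_finsetSum _ fun i _ => ((ML_incr hγ hs hst i).sq).integrable]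
  simp [E_incr_sq hγ hs hst]
  ring

/-- Constant controlling the fourth moment of increments. -/
noncomputable def c4 : ℝ := 16 * ∫ x : ℝ, x ^ 4 ∂(gaussianReal 0 1)

theorem c4_nonneg : 0 ≤ c4 := by
  unfold c4
  have : 0 ≤ ∫ x : ℝ, x ^ 4 ∂(gaussianReal 0 1) := integral_nonneg fun x => by positivity
  positivity

theorem E_incr_four (hγ : IsStdBMVec 4 P γ) {s t : ℝ} (hs : 0 ≤ s) (hst : s ≤ t) (i : Fin 4) :
    ∫ ω, (incr γ s t ω i) ^ 4 ∂P = (t - s) ^ 2 * ∫ x : ℝ, x ^ 4 ∂(gaussianReal 0 1) := by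
  have h0 : 0 ≤ t - s := by linarith
  have h := gaussianReal_map_const_mul (μ := 0) (v := 1) (√(t - s))
  have e : NNReal.mk (√(t - s) ^ 2) (sq_nonneg _) * 1 = (t - s).toNNReal := by
    rw [mul_one]
    apply NNReal.eq
    rw [Real.coe_toNNReal _ h0]
    exact Real.sq_sqrt h0
  rw [e, mul_zero] at h
  have h3 : ∫ ω, (incr γ s t ω i) ^ 4 ∂P = ∫ x, x ^ 4 ∂(P.map fun ω => incr γ s t ω i) := by
    have hm : Measurable fun ω => incr γ s t ω i :=
      (measurable_pi_apply i).comp (meas_incr hγ s t)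
    rw [integral_map hm.aemeasurable (by fun_prop)]
  rw [h3, incr_law1 hγ hs hst i, ← h, integral_map (by fun_prop) (by fun_prop),
    ← integral_const_mul]
  congr 1; ext x
  rw [mul_pow]
  congr 1
  rw [show 4 = 2 * 2 by rfl, pow_mul, Real.sq_sqrt h0]

theorem E_nsq_sq (hγ : IsStdBMVec 4 P γ) {s t : ℝ} (hs : 0 ≤ s) (hst : s ≤ t) :
    ∫ ω, nsq (incr γ s t ω) ^ 2 ∂P ≤ c4 * (t - s) ^ 2 := by
  have h4 : ∀ i, ML P fun ω => (incr γ s t ω i) ^ 4 := fun i => by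
    have := ((ML_incr hγ hs hst i).sq).sq
    simpa [← pow_mul] using this
  calc ∫ ω, nsq (incr γ s t ω) ^ 2 ∂P
      ≤ ∫ ω, 4 * ∑ i, (incr γ s t ω i) ^ 4 ∂P := by
        refine integral_mono ((ML_nsq hγ hs hst).sq).integrable
          (((ML.const 4).mul (ML.sum _ fun i _ => h4 i)).integrable) fun ω => ?_
        have := sq_sum_le_card_mul_sum_sq (s := Finset.univ) (f := fun i => (incr γ s t ω i) ^ 2)
        simpa [nsq, ← pow_mul] using this
    _ = c4 * (t - s) ^ 2 := by
        rw [integral_const_mul, integral_finsetSum _ fun i _ => (h4 i).integrable]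
        simp only [E_incr_four hγ hs hst, c4]
        simp
        ring

theorem E_U_sq (hγ : IsStdBMVec 4 P γ) {t : ℝ} (ht : 0 ≤ t) :
    ∫ ω, sqBessel4 γ t ω ^ 2 ∂P ≤ c4 * t ^ 2 := by
  have := E_nsq_sq hγ le_rfl ht
  have e : ∀ ω, nsq (incr γ 0 t ω) = sqBessel4 γ t ω := fun ω => by
    rw [U_eq]; simp [nsq, incr, (hγ.coord _).start ω]
  simpa [e] using this

theorem E_mul_incr (hγ : IsStdBMVec 4 P γ) {s t : ℝ} (hs : 0 ≤ s) (hst : s ≤ t)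
    {X : Ω → ℝ} (hX : Measurable[pastF γ s] X) {g : (Fin 4 → ℝ) → ℝ} (hg : Measurable g) :
    ∫ ω, X ω * g (incr γ s t ω) ∂P = (∫ ω, X ω ∂P) * ∫ ω, g (incr γ s t ω) ∂P := by
  have h := (indep_past_incr hγ hs hst hX).comp measurable_id hg
  exact h.integral_fun_mul_eq_mul_integral
    (hX.mono (pastF_le hγ s) le_rfl).aestronglyMeasurable
    (hg.comp (meas_incr hγ s t)).aestronglyMeasurable

theorem U_diff (s t : ℝ) (ω : Ω) : sqBessel4 γ t ω - sqBessel4 γ s ω =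
    2 * (∑ i, γ s ω i * incr γ s t ω i) + nsq (incr γ s t ω) := by
  rw [U_eq, U_eq, nsq, Finset.mul_sum, ← Finset.sum_sub_distrib, ← Finset.sum_add_distrib]
  refine Finset.sum_congr rfl fun i _ => ?_
  simp only [incr]; ring

theorem E_mul_inner (hγ : IsStdBMVec 4 P γ) {s t : ℝ} (hs : 0 ≤ s) (hst : s ≤ t)
    {X : Ω → ℝ} (hX : Measurable[pastF γ s] X) (hL : ML P X) :
    ∫ ω, X ω * (∑ i, γ s ω i * incr γ s t ω i) ∂P = 0 := by
  simp_rw [Finset.mul_sum]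
  rw [integral_finsetSum _ fun i _ =>
    (hL.mul ((ML_coord hγ hs i).mul (ML_incr hγ hs hst i))).integrable]
  refine Finset.sum_eq_zero fun i _ => ?_
  have h := E_mul_incr hγ hs hst (X := fun ω => X ω * γ s ω i)
    (mulF hX (meas_pastF hs le_rfl i))
    (g := fun x => x i) (measurable_pi_apply i)
  simp only [E_incr hγ hs hst, mul_zero] at h
  simpa [mul_assoc] using h

theorem moment1 (hγ : IsStdBMVec 4 P γ) {s t : ℝ} (hs : 0 ≤ s) (hst : s ≤ t)
    {X : Ω → ℝ} (hX : Measurable[pastF γ s] X) (hL : ML P X) :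
    ∫ ω, X ω * (sqBessel4 γ t ω - sqBessel4 γ s ω) ∂P = 4 * (t - s) * ∫ ω, X ω ∂P := by
  have hI : ML P fun ω => ∑ i, γ s ω i * incr γ s t ω i :=
    ML.sum _ fun i _ => (ML_coord hγ hs i).mul (ML_incr hγ hs hst i)
  simp_rw [U_diff, mul_add, mul_left_comm _ (2:ℝ)]
  rw [integral_add (((ML.const 2).mul (hL.mul hI)).integrable)
    ((hL.mul (ML_nsq hγ hs hst)).integrable), integral_const_mul, E_mul_inner hγ hs hst hX hL,
    E_mul_incr hγ hs hst hX meas_nsq, E_nsq hγ hs hst]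
  ring

theorem moment2 (hγ : IsStdBMVec 4 P γ) {s t : ℝ} (hs : 0 ≤ s) (hst : s ≤ t)
    {X : Ω → ℝ} (hX : Measurable[pastF γ s] X) (hL : ML P X) (h0 : ∀ ω, 0 ≤ X ω) :
    ∫ ω, X ω * (sqBessel4 γ t ω ^ 2 - sqBessel4 γ s ω ^ 2) ∂P ≤
      40 * (t - s) * (∫ ω, X ω * sqBessel4 γ s ω ∂P) + 2 * c4 * (t - s) ^ 2 * ∫ ω, X ω ∂P := by
  have hXU : Measurable[pastF γ s] fun ω => X ω * sqBessel4 γ s ω :=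
    mulF hX (U_measF hs le_rfl)
  have hU := ML_U hγ hs
  have hV := ML_U hγ (hs.trans hst)
  have hn := ML_nsq hγ hs hst
  have hM := hL.mul hU
  calc ∫ ω, X ω * (sqBessel4 γ t ω ^ 2 - sqBessel4 γ s ω ^ 2) ∂P
      ≤ ∫ ω, 2 * ((X ω * sqBessel4 γ s ω) * (sqBessel4 γ t ω - sqBessel4 γ s ω)) +
        (8 * ((X ω * sqBessel4 γ s ω) * nsq (incr γ s t ω))
          + 2 * (X ω * nsq (incr γ s t ω) ^ 2)) ∂P := by
        refine integral_mono (hL.mul (hV.sq.sub hU.sq)).integrable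
          (((ML.const 2).mul (hM.mul (hV.sub hU))).add (((ML.const 8).mul (hM.mul hn)).add
            ((ML.const 2).mul (hL.mul hn.sq)))).integrable fun ω => ?_
        have hd := U_diff (γ := γ) s t ω
        have hcs := Finset.sum_mul_sq_le_sq_mul_sq Finset.univ (fun i => γ s ω i)
          (fun i => incr γ s t ω i)
        rw [← U_eq, ← nsq] at hcs
        set a := sqBessel4 γ s ω
        set b := sqBessel4 γ t ω
        set m := ∑ i, γ s ω i * incr γ s t ω i
        set n := nsq (incr γ s t ω)
        have key : b ^ 2 - a ^ 2 ≤ 2 * (a * (b - a)) + (8 * (a * n) + 2 * n ^ 2) := by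
          have hb : b ^ 2 - a ^ 2 = 2 * (a * (b - a)) + (2 * m + n) ^ 2 := by rw [← hd]; ring
          rw [hb]
          nlinarith [sq_nonneg (2 * m - n)]
        have := mul_le_mul_of_nonneg_left key (h0 ω)
        calc _ ≤ _ := this
          _ = _ := by ring
    _ = _ := by
        rw [integral_add ((ML.const 2).mul (hM.mul (hV.sub hU))).integrable
            (((ML.const 8).mul (hM.mul hn)).add ((ML.const 2).mul (hL.mul hn.sq))).integrable,
          integral_add ((ML.const 8).mul (hM.mul hn)).integrable
            ((ML.const 2).mul (hL.mul hn.sq)).integrable,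
          integral_const_mul, integral_const_mul, integral_const_mul,
          moment1 hγ hs hst hXU hM, E_mul_incr hγ hs hst hXU meas_nsq,
          E_nsq hγ hs hst, E_mul_incr hγ hs hst hX (meas_nsq.pow_const 2)]
    _ ≤ _ := by
        have h1 := E_nsq_sq hγ hs hst
        have h2 : 0 ≤ ∫ ω, X ω ∂P := integral_nonneg h0
        nlinarith [mul_le_mul_of_nonneg_left h1 h2]

/-- The second-order error of a discretised increment. -/
noncomputable def eta (γ : ℝ → Ω → EuclideanSpace ℝ (Fin 4)) (s t : ℝ) (ω : Ω) : ℝ :=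
  (nsq (incr γ s t ω) - 4 * (t - s)) / 2

theorem ML_eta (hγ : IsStdBMVec 4 P γ) {s t : ℝ} (hs : 0 ≤ s) (hst : s ≤ t) :
    ML P (eta γ s t) := by
  have := ((ML_nsq hγ hs hst).sub (ML.const (4 * (t - s)))).mul (ML.const (1 / 2))
  convert this using 1
  ext ω; simp [eta]; ring

theorem E_mul_eta (hγ : IsStdBMVec 4 P γ) {s t : ℝ} (hs : 0 ≤ s) (hst : s ≤ t)
    {X : Ω → ℝ} (hX : Measurable[pastF γ s] X) :
    ∫ ω, X ω * eta γ s t ω ∂P = 0 := by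
  have h := E_mul_incr hγ hs hst hX (g := fun x => (nsq x - 4 * (t - s)) / 2)
    ((meas_nsq.sub_const _).div_const _)
  have h2 : ∫ ω, (nsq (incr γ s t ω) - 4 * (t - s)) / 2 ∂P = 0 := by
    rw [integral_div, integral_sub (ML_nsq hγ hs hst).integrable (integrable_const _),
      E_nsq hγ hs hst]
    simp
  rw [h2, mul_zero] at h
  exact h

theorem E_mul_eta_sq (hγ : IsStdBMVec 4 P γ) {s t : ℝ} (hs : 0 ≤ s) (hst : s ≤ t)
    {X : Ω → ℝ} (hX : Measurable[pastF γ s] X) {K : ℝ} (hK : ∀ ω, |X ω| ≤ K) :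
    ∫ ω, (X ω * eta γ s t ω) ^ 2 ∂P ≤ K ^ 2 * ((c4 + 16) * (t - s) ^ 2) := by
  have hX' : Measurable X := hX.mono (pastF_le hγ s) le_rfl
  have hn := ML_nsq hγ hs hst
  calc ∫ ω, (X ω * eta γ s t ω) ^ 2 ∂P
    ≤ ∫ ω, K ^ 2 * (nsq (incr γ s t ω) ^ 2 + 16 * (t - s) ^ 2) ∂P := by
        refine integral_mono ((ML.bdd hX' K hK).mul (ML_eta hγ hs hst)).sq.integrable
          ((ML.const _).mul (hn.sq.add (ML.const _))).integrable fun ω => ?_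
        simp only [mul_pow]
        have h1 : X ω ^ 2 ≤ K ^ 2 := sq_le_sq' (abs_le.1 (hK ω)).1 (abs_le.1 (hK ω)).2
        have h2 : eta γ s t ω ^ 2 ≤ nsq (incr γ s t ω) ^ 2 + 16 * (t - s) ^ 2 := by
          unfold eta
          nlinarith [sq_nonneg (nsq (incr γ s t ω) + 4 * (t - s)),
            sq_nonneg (nsq (incr γ s t ω)), sq_nonneg (t - s)]
        exact mul_le_mul h1 h2 (sq_nonneg _) (sq_nonneg _)
    _ ≤ _ := by
        rw [integral_const_mul, integral_add hn.sq.integrable (integrable_const _)]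
        simp only [integral_const, probReal_univ, one_smul]
        have := E_nsq_sq hγ hs hst
        refine mul_le_mul_of_nonneg_left ?_ (sq_nonneg _)
        linarith
end


/-! ### Part 3: discrete exponential martingale -/

theorem gau_exp {h : ℝ} (hh : 0 ≤ h) (w : Fin 4 → ℝ) :
    ∫ z, Complex.exp (((∑ i, w i * z i : ℝ) : ℂ) * Complex.I) ∂(gau h) =
      ((Real.exp (-(h * ∑ i, w i ^ 2) / 2) : ℝ) : ℂ) := by
  have e : ∀ z : Fin 4 → ℝ, Complex.exp (((∑ i, w i * z i : ℝ) : ℂ) * Complex.I) =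
      ∏ i, Complex.exp ((w i : ℂ) * (z i : ℂ) * Complex.I) := fun z => by
    rw [← Complex.exp_sum]
    congr 1
    push_cast
    rw [Finset.sum_mul]
  simp_rw [e]
  rw [gau, integral_fintype_prod_eq_prod (𝕜 := ℂ)
    (f := fun i (x : ℝ) => Complex.exp ((w i : ℂ) * (x : ℂ) * Complex.I))]
  have h1 : ∀ i, ∫ x : ℝ, Complex.exp ((w i : ℂ) * (x : ℂ) * Complex.I)
      ∂(gaussianReal 0 h.toNNReal) = Complex.exp (-(h * (w i : ℂ) ^ 2) / 2) := fun i => by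
    have := charFun_gaussianReal (μ := 0) (v := h.toNNReal) (w i)
    rw [charFun_apply_real] at this
    rw [this]
    congr 1
    rw [Real.coe_toNNReal _ hh]
    push_cast
    ring
  simp_rw [h1]
  rw [← Complex.exp_sum]
  push_cast
  congr 1
  rw [← Finset.sum_div, Finset.sum_neg_distrib, Finset.mul_sum]

section
variable {Ω : Type*} [MeasurableSpace Ω] {P : Measure Ω} [IsProbabilityMeasure P]
variable {γ : ℝ → Ω → EuclideanSpace ℝ (Fin 4)}

theorem exp_step (hγ : IsStdBMVec 4 P γ) {s t : ℝ} (hs : 0 ≤ s) (hst : s ≤ t)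
    {X : Ω → ℂ} (hX : Measurable[pastF γ s] X) {w : Ω → Fin 4 → ℝ}
    (hw : Measurable[pastF γ s] w) {C : ℝ} (hC : ∀ ω, ‖X ω‖ ≤ C) :
    ∫ ω, X ω * Complex.exp (((∑ i, w ω i * incr γ s t ω i : ℝ) : ℂ) * Complex.I) ∂P =
      ∫ ω, X ω * ((Real.exp (-((t - s) * ∑ i, w ω i ^ 2) / 2) : ℝ) : ℂ) ∂P := by
  have hX' : Measurable X := hX.mono (pastF_le hγ s) le_rfl
  have hw' : Measurable w := hw.mono (pastF_le hγ s) le_rfl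
  have hXw : Measurable[pastF γ s] fun ω => (X ω, w ω) := hX.prodMk hw
  have hlaw := law_prod hγ hs hst hXw
  let F : (ℂ × (Fin 4 → ℝ)) × (Fin 4 → ℝ) → ℂ := fun p =>
    p.1.1 * Complex.exp (((∑ i, p.1.2 i * p.2 i : ℝ) : ℂ) * Complex.I)
  have hF : Measurable F := by fun_prop
  have hY : Measurable fun ω => ((X ω, w ω), incr γ s t ω) :=
    (hX'.prodMk hw').prodMk (meas_incr hγ s t)
  have hXw' : Measurable fun ω => (X ω, w ω) := hX'.prodMk hw'
  have e1 : ∫ ω, X ω * Complex.exp (((∑ i, w ω i * incr γ s t ω i : ℝ) : ℂ) * Complex.I) ∂P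
      = ∫ p, F p ∂(P.map fun ω => ((X ω, w ω), incr γ s t ω)) := by
    rw [integral_map hY.aemeasurable hF.aestronglyMeasurable]
  have hFint : Integrable F ((P.map fun ω => (X ω, w ω)).prod (gau (t - s))) := by
    rw [← hlaw, integrable_map_measure hF.aestronglyMeasurable hY.aemeasurable]
    refine Integrable.of_bound (hF.comp hY).aestronglyMeasurable C (ae_of_all _ fun ω => ?_)
    simp only [F, Function.comp]
    rw [norm_mul, Complex.norm_exp_ofReal_mul_I, mul_one]
    exact hC ω
  have : IsProbabilityMeasure (P.map fun ω => (X ω, w ω)) :=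
    Measure.isProbabilityMeasure_map hXw'.aemeasurable
  rw [e1, hlaw, integral_prod _ hFint, integral_map hXw'.aemeasurable]
  · refine integral_congr_ae (ae_of_all _ fun ω => ?_)
    simp only [F]
    rw [integral_const_mul, gau_exp (by linarith)]
  · exact hFint.1.integral_prod_right'

/-- Left Riemann sums with mesh `h`. -/
def rsum (h : ℝ) (u : ℝ → ℝ) (m : ℕ) : ℝ := ∑ i ∈ Finset.range m, h * u (i * h)

theorem rsum_succ (h : ℝ) (u : ℝ → ℝ) (m : ℕ) :
    rsum h u (m + 1) = rsum h u m + h * u (m * h) := Finset.sum_range_succ _ _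

theorem rsum_meas {h : ℝ} (hh : 0 ≤ h) {m j : ℕ} (hj : m ≤ j + 1) :
    Measurable[pastF γ (j * h)] fun ω => rsum h (fun t => sqBessel4 γ t ω) m := by
  refine sumF _ fun i hi => ?_
  have hi' : i ≤ j := by have := Finset.mem_range.1 hi; omega
  exact mulF measurable_const (U_measF (by positivity) (by gcongr))

/-- quadratic sum. -/
def vsum (Θ : ℝ → ℝ) (h : ℝ) (u : ℝ → ℝ) (m : ℕ) : ℝ :=
  ∑ j ∈ Finset.range m, Θ (rsum h u (j + 1)) ^ 2 * (h * u (j * h))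

theorem vsum_bound {Θ : ℝ → ℝ} {K R h : ℝ} (hR : 0 ≤ R) (hK : ∀ x, |Θ x| ≤ K)
    (hΘ : ∀ x, R < x → Θ x = 0) (hh : 0 ≤ h) {u : ℝ → ℝ} (hu : ∀ t, 0 ≤ u t) (m : ℕ) :
    vsum Θ h u m ≤ K ^ 2 * rsum h u m ∧ vsum Θ h u m ≤ K ^ 2 * R := by
  induction m with
  | zero => simp [vsum, rsum]; positivity
  | succ m ih =>
    have e : vsum Θ h u (m + 1) = vsum Θ h u m + Θ (rsum h u (m + 1)) ^ 2 * (h * u (m * h)) :=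
      Finset.sum_range_succ _ _
    have e2 := rsum_succ h u m
    have hp : 0 ≤ h * u (m * h) := mul_nonneg hh (hu _)
    have hsq : Θ (rsum h u (m + 1)) ^ 2 ≤ K ^ 2 :=
      sq_le_sq' (abs_le.1 (hK _)).1 (abs_le.1 (hK _)).2
    have h1 : vsum Θ h u (m + 1) ≤ K ^ 2 * rsum h u (m + 1) := by
      rw [e]
      nlinarith [mul_le_mul_of_nonneg_right hsq hp]
    refine ⟨h1, ?_⟩
    by_cases hc : R < rsum h u (m + 1)
    · rw [e, hΘ _ hc]; simpa using ih.2
    · exact h1.trans (mul_le_mul_of_nonneg_left (not_lt.1 hc) (sq_nonneg _))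

/-- discrete stochastic integral. -/
noncomputable def lsum (Θ : ℝ → ℝ) (h : ℝ) (γ : ℝ → Ω → EuclideanSpace ℝ (Fin 4)) (m : ℕ) (ω : Ω) : ℝ :=
  ∑ j ∈ Finset.range m, Θ (rsum h (fun t => sqBessel4 γ t ω) (j + 1)) *
    ∑ i, γ (j * h) ω i * incr γ (j * h) ((j + 1 : ℕ) * h) ω i

/-- error sum. -/
noncomputable def esum (Θ : ℝ → ℝ) (h : ℝ) (γ : ℝ → Ω → EuclideanSpace ℝ (Fin 4)) (m : ℕ) (ω : Ω) : ℝ :=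
  ∑ j ∈ Finset.range m, Θ (rsum h (fun t => sqBessel4 γ t ω) (j + 1)) *
    eta γ (j * h) ((j + 1 : ℕ) * h) ω

theorem theta_meas {Θ : ℝ → ℝ} (hΘm : Measurable Θ) {h : ℝ} (hh : 0 ≤ h) {j J : ℕ}
    (hj : j ≤ J) :
    Measurable[pastF γ (J * h)] fun ω => Θ (rsum h (fun t => sqBessel4 γ t ω) (j + 1)) :=
  hΘm.comp (rsum_meas hh (by omega))

theorem subF {Ω : Type*} {m : MeasurableSpace Ω} {f g : Ω → ℝ} (hf : Measurable[m] f)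
    (hg : Measurable[m] g) : Measurable[m] fun ω => f ω - g ω := hf.sub hg

theorem lsum_meas {Θ : ℝ → ℝ} (hΘm : Measurable Θ) {h : ℝ} (hh : 0 ≤ h) (J : ℕ) :
    Measurable[pastF γ (J * h)] (lsum Θ h γ J) := by
  refine sumF _ fun j hj => ?_
  have hj' := Finset.mem_range.1 hj
  have hj2 : ((j + 1 : ℕ) : ℝ) * h ≤ J * h := by
    gcongr; exact hj'
  have hj3 : (j : ℝ) * h ≤ J * h := by gcongr
  refine mulF (theta_meas hΘm hh hj'.le) (sumF _ fun i _ => mulF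
    (meas_pastF (by positivity) hj3 i) ?_)
  exact subF (meas_pastF (by positivity) hj2 i) (meas_pastF (by positivity) hj3 i)

theorem eta_measF {s t : ℝ} (hs : 0 ≤ s) (hst : s ≤ t) {r : ℝ} (hr : t ≤ r) :
    Measurable[pastF γ r] (eta γ s t) := by
  have h1 : Measurable[pastF γ r] fun ω => nsq (incr γ s t ω) :=
    sumF _ fun i _ => powF (subF (meas_pastF (hs.trans hst) hr i)
      (meas_pastF hs (hst.trans hr) i)) 2
  exact (subF h1 measurable_const).div_const 2

theorem esum_meas {Θ : ℝ → ℝ} (hΘm : Measurable Θ) {h : ℝ} (hh : 0 ≤ h) (J : ℕ) :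
    Measurable[pastF γ (J * h)] (esum Θ h γ J) := by
  refine sumF _ fun j hj => ?_
  have hj' := Finset.mem_range.1 hj
  have hj2 : ((j + 1 : ℕ) : ℝ) * h ≤ J * h := by
    gcongr; exact hj'
  exact mulF (theta_meas hΘm hh hj'.le) (eta_measF (by positivity) (by gcongr; omega) hj2)

theorem vsum_meas {Θ : ℝ → ℝ} (hΘm : Measurable Θ) {h : ℝ} (hh : 0 ≤ h) (J : ℕ) :
    Measurable[pastF γ (J * h)] fun ω => vsum Θ h (fun t => sqBessel4 γ t ω) J := by
  refine sumF _ fun j hj => ?_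
  have hj' := Finset.mem_range.1 hj
  have hj3 : (j : ℝ) * h ≤ J * h := by gcongr
  exact mulF (powF (theta_meas hΘm hh hj'.le) 2)
    (mulF measurable_const (U_measF (by positivity) hj3))

theorem piF {Ω : Type*} {m : MeasurableSpace Ω} {f : Ω → Fin 4 → ℝ}
    (hf : ∀ i, Measurable[m] fun ω => f ω i) : Measurable[m] f := measurable_pi_lambda _ hf

theorem expF {Ω : Type*} {m : MeasurableSpace Ω} {f g : Ω → ℝ} (hf : Measurable[m] f)
    (hg : Measurable[m] g) : Measurable[m] fun ω => ((Real.exp (f ω / 2) : ℝ) : ℂ) *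
        Complex.exp ((g ω : ℂ) * Complex.I) := by fun_prop

set_option maxHeartbeats 1000000 in
theorem exp_mart (hγ : IsStdBMVec 4 P γ) {Θ : ℝ → ℝ} {K R h : ℝ} (hΘm : Measurable Θ)
    (hR : 0 ≤ R) (hK : ∀ x, |Θ x| ≤ K)
    (hΘ : ∀ x, R < x → Θ x = 0) (hh : 0 ≤ h) (J : ℕ) :
    ∫ ω, ((Real.exp (vsum Θ h (fun t => sqBessel4 γ t ω) J / 2) : ℝ) : ℂ) *
      Complex.exp ((lsum Θ h γ J ω : ℂ) * Complex.I) ∂P = 1 := by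
  induction J with
  | zero => simp [vsum, lsum]
  | succ J ih =>
    rw [← ih]
    have hs : (0:ℝ) ≤ J * h := by positivity
    have hst : (J : ℝ) * h ≤ (J + 1 : ℕ) * h := by gcongr; omega
    have hm1 : Measurable[pastF γ (J * h)] fun ω =>
        vsum Θ h (fun t => sqBessel4 γ t ω) (J + 1) := by
      refine sumF _ fun j hj => ?_
      have hj' := Finset.mem_range.1 hj
      have hj3 : (j : ℝ) * h ≤ J * h := by gcongr; omega
      exact mulF (powF (theta_meas hΘm hh (by omega)) 2)
        (mulF measurable_const (U_measF (by positivity) hj3))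
    have hX : Measurable[pastF γ (J * h)] fun ω =>
      ((Real.exp (vsum Θ h (fun t => sqBessel4 γ t ω) (J + 1) / 2) : ℝ) : ℂ) *
        Complex.exp ((lsum Θ h γ J ω : ℂ) * Complex.I) := by
      have hm2 := lsum_meas (γ := γ) hΘm hh J
      exact expF hm1 hm2
    have hw : Measurable[pastF γ (J * h)] fun ω (i : Fin 4) =>
        Θ (rsum h (fun t => sqBessel4 γ t ω) (J + 1)) * γ (J * h) ω i := by
      refine piF fun i => ?_
      exact mulF (theta_meas hΘm hh le_rfl) (meas_pastF hs le_rfl i)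
    have hC : ∀ ω, ‖((Real.exp (vsum Θ h (fun t => sqBessel4 γ t ω) (J + 1) / 2) : ℝ) : ℂ) *
        Complex.exp ((lsum Θ h γ J ω : ℂ) * Complex.I)‖ ≤ Real.exp (K ^ 2 * R / 2) := fun ω => by
      rw [norm_mul, Complex.norm_exp_ofReal_mul_I, mul_one, Complex.norm_real,
        Real.norm_of_nonneg (Real.exp_pos _).le]
      have := (vsum_bound hR hK hΘ hh (fun t => U_nonneg (γ := γ) t ω) (J + 1)).2
      gcongr
    have key := exp_step hγ hs hst hX hw hC
    refine Eq.trans ?_ (key.trans ?_)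
    · refine integral_congr_ae (ae_of_all _ fun ω => ?_)
      simp only
      rw [mul_assoc, ← Complex.exp_add]
      congr 2
      rw [← add_mul]
      congr 1
      rw [← Complex.ofReal_add]
      congr 1
      rw [lsum, Finset.sum_range_succ, ← lsum]
      congr 1
      rw [Finset.mul_sum]
      simp [mul_assoc]
    · refine integral_congr_ae (ae_of_all _ fun ω => ?_)
      simp only
      rw [mul_right_comm, ← Complex.ofReal_mul, ← Real.exp_add]
      congr 4
      rw [vsum, Finset.sum_range_succ, ← vsum]
      simp only [mul_pow]
      rw [← Finset.mul_sum, ← U_eq]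
      push_cast
      ring

theorem esum_L2 (hγ : IsStdBMVec 4 P γ) {Θ : ℝ → ℝ} {K h : ℝ} (hΘm : Measurable Θ)
    (hK : ∀ x, |Θ x| ≤ K) (hh : 0 ≤ h) (J : ℕ) :
    ML P (esum Θ h γ J) ∧
    ∫ ω, esum Θ h γ J ω ^ 2 ∂P ≤ J * (K ^ 2 * ((c4 + 16) * h ^ 2)) := by
  induction J with
  | zero =>
    constructor
    · have : esum Θ h γ 0 = fun _ => 0 := by ext; simp [esum]
      rw [this]; exact ML.const 0
    · simp [esum]
  | succ J ih =>
    have hs : (0:ℝ) ≤ J * h := by positivity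
    have hst : (J : ℝ) * h ≤ (J + 1 : ℕ) * h := by gcongr; omega
    have hθ := theta_meas (γ := γ) hΘm hh (le_refl J)
    have hθL : ML P fun ω => Θ (rsum h (fun t => sqBessel4 γ t ω) (J + 1)) :=
      ML.bdd (hθ.mono (pastF_le hγ _) le_rfl) K fun ω => hK _
    have hη := ML_eta hγ hs hst
    have e : esum Θ h γ (J + 1) = fun ω => esum Θ h γ J ω +
      Θ (rsum h (fun t => sqBessel4 γ t ω) (J + 1)) * eta γ (J * h) ((J + 1 : ℕ) * h) ω := by
      ext ω; rw [esum, Finset.sum_range_succ, ← esum]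
    rw [e]
    refine ⟨ih.1.add (hθL.mul hη), ?_⟩
    have h1 := E_mul_eta_sq hγ hs hst hθ (fun ω => hK _)
    have h2 := E_mul_eta hγ hs hst (mulF (esum_meas hΘm hh J) hθ)
    have e2 : ∀ ω, (esum Θ h γ J ω +
      Θ (rsum h (fun t => sqBessel4 γ t ω) (J + 1)) * eta γ (J * h) ((J + 1 : ℕ) * h) ω) ^ 2 =
      esum Θ h γ J ω ^ 2 + (2 * (esum Θ h γ J ω *
        Θ (rsum h (fun t => sqBessel4 γ t ω) (J + 1)) * eta γ (J * h) ((J + 1 : ℕ) * h) ω) +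
        (Θ (rsum h (fun t => sqBessel4 γ t ω) (J + 1)) * eta γ (J * h) ((J + 1 : ℕ) * h) ω) ^ 2) :=
      fun ω => by ring
    simp_rw [e2]
    rw [integral_add ih.1.sq.integrable
      (((ML.const 2).mul ((ih.1.mul hθL).mul hη)).add (hθL.mul hη).sq).integrable,
      integral_add ((ML.const 2).mul ((ih.1.mul hθL).mul hη)).integrable
        (hθL.mul hη).sq.integrable, integral_const_mul, h2]
    have e3 : ((J + 1 : ℕ) : ℝ) * h - J * h = h := by push_cast; ring
    rw [e3] at h1
    have := ih.2
    push_cast at *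
    linarith

end


/-! ### Part 4: deterministic facts on time changes -/

theorem rsum_mono {h : ℝ} (hh : 0 ≤ h) {u : ℝ → ℝ} (hu : ∀ t, 0 ≤ u t) : Monotone (rsum h u) :=
  monotone_nat_of_le_succ fun m => by
    rw [rsum_succ]; have := mul_nonneg hh (hu (m * h)); linarith

theorem rsum_close {u : ℝ → ℝ} (hc : Continuous u) {T : ℝ} (hT : 0 < T) {ε : ℝ} (hε : 0 < ε) :
    ∃ δ > 0, ∀ h, 0 < h → h < δ → ∀ m : ℕ, m * h ≤ T →
      |rsum h u m - ∫ s in (0:ℝ)..(m * h), u s| ≤ ε := by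
  have huc : UniformContinuousOn u (Icc 0 T) :=
    isCompact_Icc.uniformContinuousOn_of_continuous hc.continuousOn
  obtain ⟨δ, hδ, H⟩ := Metric.uniformContinuousOn_iff.1 huc (ε / T) (by positivity)
  refine ⟨δ, hδ, fun h h0 hhδ m hm => ?_⟩
  suffices hs : ∀ m : ℕ, m * h ≤ T → |rsum h u m - ∫ s in (0:ℝ)..(m * h), u s| ≤ ε / T * (m * h) by
    refine (hs m hm).trans ?_
    rw [div_mul_eq_mul_div, div_le_iff₀ hT]
    gcongr
  clear hm m
  intro m
  induction m with
  | zero => simp [rsum]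
  | succ m ih =>
    intro hm
    have e0 : ((m + 1 : ℕ) : ℝ) * h = m * h + h := by push_cast; ring
    rw [e0] at hm ⊢
    have hmh : 0 ≤ (m : ℝ) * h := by positivity
    have ih' := ih (by linarith)
    rw [rsum_succ, ← intervalIntegral.integral_add_adjacent_intervals
      (hc.intervalIntegrable 0 (m * h)) (hc.intervalIntegrable (m * h) (m * h + h))]
    have h2 : |∫ s in (m * h : ℝ)..(m * h + h), (u s - u (m * h))| ≤ ε / T * |m * h + h - m * h| := by
      rw [← Real.norm_eq_abs (∫ s in (m * h : ℝ)..(m * h + h), (u s - u (m * h)))]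
      refine intervalIntegral.norm_integral_le_of_norm_le_const fun x hx => ?_
      rw [uIoc_of_le (by linarith)] at hx
      refine (H x ⟨by linarith [hx.1], by linarith [hx.2]⟩ (m * h) ⟨hmh, by linarith⟩ ?_).le
      rw [Real.dist_eq, abs_of_pos (by linarith [hx.1])]
      linarith [hx.2]
    rw [intervalIntegral.integral_sub (hc.intervalIntegrable _ _) (by simp),
      intervalIntegral.integral_const, add_sub_cancel_left, abs_of_pos h0, smul_eq_mul] at h2
    rw [abs_le] at *
    constructor <;> nlinarith [h2.1, h2.2, ih'.1, ih'.2]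

open Classical in
/-- Discrete inverse of the clock. -/
noncomputable def sig (h : ℝ) (u : ℝ → ℝ) (J : ℕ) (r : ℝ) : ℕ :=
  Nat.findGreatest (fun m => rsum h u m ≤ r) J

theorem sig_le (h : ℝ) (u : ℝ → ℝ) (J : ℕ) (r : ℝ) : sig h u J r ≤ J := by
  classical
  exact Nat.findGreatest_le J

theorem le_sig_iff {h : ℝ} (hh : 0 ≤ h) {u : ℝ → ℝ} (hu : ∀ t, 0 ≤ u t) {r : ℝ} (hr : 0 ≤ r)
    {m J : ℕ} (hm : m ≤ J) : m ≤ sig h u J r ↔ rsum h u m ≤ r := by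
  classical
  constructor
  · intro hms
    have h0 : rsum h u (sig h u J r) ≤ r :=
      Nat.findGreatest_spec (P := fun m => rsum h u m ≤ r) (Nat.zero_le J) (by simpa [rsum] using hr)
    exact (rsum_mono hh hu hms).trans h0
  · intro hms
    exact Nat.le_findGreatest hm hms

theorem sum_sig {h : ℝ} (hh : 0 ≤ h) {u : ℝ → ℝ} (hu : ∀ t, 0 ≤ u t) {r : ℝ} (hr : 0 ≤ r)
    (J : ℕ) (f : ℕ → ℝ) :
    ∑ j ∈ Finset.range J, (Iic r).indicator (fun _ => (1:ℝ)) (rsum h u (j + 1)) *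
      (f (j + 1) - f j) = f (sig h u J r) - f 0 := by
  rw [← Finset.sum_range_sub]
  symm
  rw [← Finset.sum_subset (Finset.range_mono (sig_le h u J r))]
  · refine Finset.sum_congr rfl fun j hj => ?_
    have hj' := Finset.mem_range.1 hj
    have := (le_sig_iff hh hu hr (m := j + 1) (hj'.trans_le (sig_le h u J r))).1 hj'
    simp [this]
  · intro j hj hj2
    have hj' := Finset.mem_range.1 hj
    have : ¬ rsum h u (j + 1) ≤ r := fun hc =>
      hj2 (Finset.mem_range.2 ((le_sig_iff hh hu hr (m := j + 1) hj').2 hc))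
    simp [this]

theorem sig_tendsto {u : ℝ → ℝ} (hc : Continuous u) (hu : ∀ t, 0 ≤ u t)
    (ha : StrictMonoOn (fun t => ∫ s in (0:ℝ)..t, u s) (Ici 0)) {c : ℝ} (hc0 : 0 ≤ c)
    {h : ℕ → ℝ} (hh : ∀ k, 0 < h k) (hh0 : Tendsto h atTop (nhds 0)) {J : ℕ → ℕ}
    (hJ : Tendsto (fun k => J k * h k) atTop atTop) :
    Tendsto (fun k => (sig (h k) u (J k) (∫ s in (0:ℝ)..c, u s) : ℝ) * h k) atTop (nhds c) ∧
    Tendsto (fun k => rsum (h k) u (sig (h k) u (J k) (∫ s in (0:ℝ)..c, u s))) atTop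
      (nhds (∫ s in (0:ℝ)..c, u s)) := by
  set a : ℝ → ℝ := fun t => ∫ s in (0:ℝ)..t, u s with had
  have hr0 : 0 ≤ a c := by
    have := ha.monotoneOn (mem_Ici.2 le_rfl) (mem_Ici.2 hc0) hc0
    simpa [had] using this
  have key : Tendsto (fun k => (sig (h k) u (J k) (a c) : ℝ) * h k) atTop (nhds c) := by
    rw [tendsto_order]
    constructor
    · intro b hb
      rcases lt_or_ge b 0 with hb0 | hb0
      · refine Eventually.of_forall fun k => hb0.trans_le ?_
        have := (hh k).le
        positivity
      set d := (b + c) / 2 with hd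
      have hdc : d < c := by simp only [hd]; linarith
      have hbd : b < d := by simp only [hd]; linarith
      have hd0 : 0 < d := by linarith
      have had' : a d < a c := ha (mem_Ici.2 hd0.le) (mem_Ici.2 hc0) hdc
      obtain ⟨δ, hδ, H⟩ := rsum_close hc (T := c + 1) (by linarith) (sub_pos.2 had')
      filter_upwards [hh0.eventually (gt_mem_nhds hδ), hJ.eventually_ge_atTop d,
        hh0.eventually (gt_mem_nhds (sub_pos.2 hbd))] with k h1 h2 h3
      have hk := hh k
      set m := ⌊d / h k⌋₊ with hm
      have hm1 : (m : ℝ) * h k ≤ d := by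
        have := Nat.floor_le (div_nonneg hd0.le hk.le)
        rwa [le_div_iff₀ hk] at this
      have hm2 : d < (m + 1) * h k := by
        have := Nat.lt_floor_add_one (d / h k)
        rwa [div_lt_iff₀ hk] at this
      have hmJ : m ≤ J k := by
        have : (m : ℝ) * h k ≤ J k * h k := hm1.trans h2
        exact_mod_cast le_of_mul_le_mul_right this hk
      have hms : m ≤ sig (h k) u (J k) (a c) := by
        rw [le_sig_iff hk.le hu hr0 hmJ]
        have h4 := (abs_le.1 (H _ hk h1 m (by linarith))).2
        have h5 : a (m * h k) ≤ a d :=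
          ha.monotoneOn (mem_Ici.2 (by positivity)) (mem_Ici.2 hd0.le) hm1
        simp only [had] at h4 h5 ⊢
        linarith
      have hms' : (m : ℝ) * h k ≤ sig (h k) u (J k) (a c) * h k := by
        gcongr
      nlinarith
    · intro b hb
      set d := (b + c) / 2 with hd
      have hdc : c < d := by simp only [hd]; linarith
      have hbd : d < b := by simp only [hd]; linarith
      have hd0 : 0 < d := by linarith
      have had' : a c < a d := ha (mem_Ici.2 hc0) (mem_Ici.2 hd0.le) hdc
      obtain ⟨δ, hδ, H⟩ := rsum_close hc (T := d + 1) (by linarith) (half_pos (sub_pos.2 had'))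
      filter_upwards [hh0.eventually (gt_mem_nhds hδ), 
        hh0.eventually (gt_mem_nhds (lt_min one_pos (sub_pos.2 hbd)))] with k h1 h3
      have hk := hh k
      have h31 : h k < 1 := h3.trans_le (min_le_left _ _)
      have h32 : h k < b - d := h3.trans_le (min_le_right _ _)
      by_contra hcon
      rw [not_lt] at hcon
      set m := ⌊d / h k⌋₊ with hm
      have hm1 : (m : ℝ) * h k ≤ d := by
        have := Nat.floor_le (div_nonneg hd0.le hk.le)
        rwa [le_div_iff₀ hk] at this
      have hm2 : d < (m + 1) * h k := by
        have := Nat.lt_floor_add_one (d / h k)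
        rwa [div_lt_iff₀ hk] at this
      have hms : m + 1 ≤ sig (h k) u (J k) (a c) := by
        have : ((m + 1 : ℕ) : ℝ) * h k ≤ sig (h k) u (J k) (a c) * h k := by
          push_cast; nlinarith
        exact_mod_cast le_of_mul_le_mul_right this hk
      have h6 := (le_sig_iff hk.le hu hr0 (hms.trans (sig_le _ _ _ _))).1 hms
      have h4 := (abs_le.1 (H _ hk h1 (m + 1) (by push_cast; linarith))).1
      have h5 : a d ≤ a ((m + 1 : ℕ) * h k) :=
          ha.monotoneOn (mem_Ici.2 hd0.le) (mem_Ici.2 (by positivity)) (by push_cast; exact hm2.le)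
      simp only [had] at h4 h5 h6 had'
      linarith
  refine ⟨key, ?_⟩
  have hac : Continuous a := by
    exact intervalIntegral.continuous_primitive (fun x y => hc.intervalIntegrable x y) 0
  have h1 : Tendsto (fun k => a ((sig (h k) u (J k) (a c) : ℝ) * h k)) atTop (nhds (a c)) :=
    (hac.tendsto c).comp key
  have h2 : Tendsto (fun k => rsum (h k) u (sig (h k) u (J k) (a c)) -
      a ((sig (h k) u (J k) (a c) : ℝ) * h k)) atTop (nhds 0) := by
    rw [Metric.tendsto_nhds]
    intro ε hε
    obtain ⟨δ, hδ, H⟩ := rsum_close hc (T := c + 1) (by linarith) (half_pos hε)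
    filter_upwards [hh0.eventually (gt_mem_nhds hδ),
      key.eventually (ge_mem_nhds (lt_add_one c))] with k h1 h2
    rw [Real.dist_eq, sub_zero]
    exact (H _ (hh k) h1 _ h2).trans_lt (by linarith)
  simpa using h2.add h1


/-! ### Part 5: construction of the time changed process -/

/-- Good paths. -/
def GoodP (u : ℝ → ℝ) : Prop :=
  (∀ q : ℚ, 0 < q → 0 < u q) ∧ ∀ n : ℕ, ∃ m : ℕ, (n : ℝ) < ∫ s in (0:ℝ)..m, u s

theorem clock_strictMono {u : ℝ → ℝ} (hc : Continuous u) (hu : ∀ t, 0 ≤ u t) (hg : GoodP u) :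
    StrictMonoOn (fun t => ∫ s in (0:ℝ)..t, u s) (Ici 0) := by
  intro x hx y hy hxy
  have hx' : 0 ≤ x := hx
  simp only
  rw [← sub_pos, intervalIntegral.integral_interval_sub_left (hc.intervalIntegrable _ _)
    (hc.intervalIntegrable _ _)]
  obtain ⟨q, hq1, hq2⟩ := exists_rat_btwn hxy
  refine intervalIntegral.integral_pos hxy hc.continuousOn (fun z _ => hu z)
    ⟨q, ⟨hq1.le, hq2.le⟩, hg.1 q ?_⟩
  exact_mod_cast hx'.trans_lt hq1

/-- The clock extended to a bijection of the line. -/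
noncomputable def clk (u : ℝ → ℝ) (t : ℝ) : ℝ := (∫ s in (0:ℝ)..(max t 0), u s) + min t 0

/-- The inverse of the clock. -/
noncomputable def tinv (u : ℝ → ℝ) (r : ℝ) : ℝ := Function.invFun (clk u) r

theorem clk_of_nonneg (u : ℝ → ℝ) {t : ℝ} (ht : 0 ≤ t) : clk u t = ∫ s in (0:ℝ)..t, u s := by
  simp [clk, ht]

theorem clk_of_nonpos (u : ℝ → ℝ) {t : ℝ} (ht : t ≤ 0) : clk u t = t := by
  simp [clk, ht]

theorem clk_strictMono {u : ℝ → ℝ} (hc : Continuous u) (hu : ∀ t, 0 ≤ u t) (hg : GoodP u) :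
    StrictMono (clk u) := by
  have ha := clock_strictMono hc hu hg
  intro x y hxy
  unfold clk
  rcases le_or_gt y 0 with hy | hy
  · simpa [hy, (hxy.trans_le hy).le] using hxy
  · have h1 : (∫ s in (0:ℝ)..(max x 0), u s) < ∫ s in (0:ℝ)..(max y 0), u s :=
      ha (mem_Ici.2 (le_max_right _ _)) (mem_Ici.2 (le_max_right _ _))
        (by rw [max_eq_left hy.le]; exact max_lt hxy hy)
    have h2 : min x 0 ≤ min y 0 := min_le_min_right _ hxy.le
    linarith

theorem clk_surj {u : ℝ → ℝ} (hc : Continuous u) (hg : GoodP u) :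
    Function.Surjective (clk u) := by
  intro r
  rcases le_or_gt r 0 with hr | hr
  · exact ⟨r, clk_of_nonpos u hr⟩
  · obtain ⟨n, hn⟩ := exists_nat_gt r
    obtain ⟨m, hm⟩ := hg.2 n
    have hac : Continuous fun t => ∫ s in (0:ℝ)..t, u s :=
      intervalIntegral.continuous_primitive (fun x y => hc.intervalIntegrable x y) 0
    have := intermediate_value_Icc (Nat.cast_nonneg (α := ℝ) m) hac.continuousOn
    obtain ⟨c, hcm, hcr⟩ := this ⟨by simpa using hr.le, (hn.trans hm).le⟩
    exact ⟨c, by rw [clk_of_nonneg u hcm.1]; exact hcr⟩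

theorem tinv_clk {u : ℝ → ℝ} (hc : Continuous u) (hu : ∀ t, 0 ≤ u t) (hg : GoodP u) (t : ℝ) :
    tinv u (clk u t) = t :=
  Function.leftInverse_invFun (clk_strictMono hc hu hg).injective t

theorem clk_tinv {u : ℝ → ℝ} (hc : Continuous u) (hg : GoodP u) (r : ℝ) :
    clk u (tinv u r) = r :=
  Function.rightInverse_invFun (clk_surj hc hg) r

theorem tinv_cont {u : ℝ → ℝ} (hc : Continuous u) (hu : ∀ t, 0 ≤ u t) (hg : GoodP u) :
    Continuous (tinv u) := by
  let e := StrictMono.orderIsoOfSurjective (clk u) (clk_strictMono hc hu hg) (clk_surj hc hg)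
  have : tinv u = e.symm := by
    ext r
    apply e.injective
    rw [OrderIso.apply_symm_apply]
    exact clk_tinv hc hg r
  rw [this]
  exact e.symm.continuous

theorem tinv_nonpos {u : ℝ → ℝ} (hc : Continuous u) (hu : ∀ t, 0 ≤ u t) (hg : GoodP u)
    {r : ℝ} (hr : r ≤ 0) : tinv u r = r := by
  conv_lhs => rw [← clk_of_nonpos u hr]
  exact tinv_clk hc hu hg r

theorem tinv_nonneg {u : ℝ → ℝ} (hc : Continuous u) (hu : ∀ t, 0 ≤ u t) (hg : GoodP u)
    {r : ℝ} (hr : 0 ≤ r) : 0 ≤ tinv u r := by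
  by_contra h
  rw [not_le] at h
  have := clk_tinv hc hg r
  rw [clk_of_nonpos u h.le] at this
  linarith

theorem clock_tinv {u : ℝ → ℝ} (hc : Continuous u) (hu : ∀ t, 0 ≤ u t) (hg : GoodP u)
    {r : ℝ} (hr : 0 ≤ r) : ∫ s in (0:ℝ)..(tinv u r), u s = r := by
  rw [← clk_of_nonneg u (tinv_nonneg hc hu hg hr), clk_tinv hc hg]

/-- mesh -/
noncomputable def hk (k : ℕ) : ℝ := ((k + 1 : ℝ) ^ 2)⁻¹
/-- number of steps -/
def Jk (k : ℕ) : ℕ := (k + 1) ^ 3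

theorem hk_pos (k : ℕ) : 0 < hk k := by unfold hk; positivity

theorem hk_tendsto : Tendsto hk atTop (nhds 0) := by
  have h := (tendsto_one_div_add_atTop_nhds_zero_nat (𝕜 := ℝ))
  have := h.pow 2
  have e : hk = fun k : ℕ => (1 / ((k : ℝ) + 1)) ^ 2 := by
    ext k; simp [hk]
  rw [e]
  simpa using this

theorem Jk_hk (k : ℕ) : (Jk k : ℝ) * hk k = k + 1 := by
  unfold Jk hk; push_cast; field_simp

theorem Jk_tendsto : Tendsto (fun k => (Jk k : ℝ) * hk k) atTop atTop := by
  simp_rw [Jk_hk]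
  exact tendsto_atTop_add_const_right _ _ tendsto_natCast_atTop_atTop

theorem Jk_sq (k : ℕ) : (Jk k : ℝ) * hk k ^ 2 = 1 / (k + 1) := by
  rw [pow_two, ← mul_assoc, Jk_hk]; unfold hk; field_simp

section
variable {Ω : Type*} [MeasurableSpace Ω] {P : Measure Ω} [IsProbabilityMeasure P]
variable {γ : ℝ → Ω → EuclideanSpace ℝ (Fin 4)}

/-- half of the compensated process -/
noncomputable def Nn (γ : ℝ → Ω → EuclideanSpace ℝ (Fin 4)) (t : ℝ) (ω : Ω) : ℝ :=
  (sqBessel4 γ t ω - 4 * t) / 2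

open Classical in
/-- The time changed Brownian motion. -/
noncomputable def Bd (γ : ℝ → Ω → EuclideanSpace ℝ (Fin 4)) (r : ℝ) (ω : Ω) : ℝ :=
  if GoodP (fun t => sqBessel4 γ t ω) then
    Nn γ (max (tinv (fun t => sqBessel4 γ t ω) r) 0) ω else 0

theorem Nn_zero (hγ : IsStdBMVec 4 P γ) (ω : Ω) : Nn γ 0 ω = 0 := by
  simp [Nn, U_zero hγ]

theorem Nn_cont (hγ : IsStdBMVec 4 P γ) (ω : Ω) : Continuous fun t => Nn γ t ω := by
  have := U_cont hγ ω
  unfold Nn; fun_prop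

theorem Bd_cont (hγ : IsStdBMVec 4 P γ) (ω : Ω) : Continuous fun r => Bd γ r ω := by
  unfold Bd
  by_cases hg : GoodP (fun t => sqBessel4 γ t ω)
  · simp only [hg, if_true]
    exact (Nn_cont hγ ω).comp ((tinv_cont (U_cont hγ ω) (fun t => U_nonneg t ω) hg).max
      continuous_const)
  · simp only [hg, if_false]
    exact continuous_const

theorem Bd_nonpos (hγ : IsStdBMVec 4 P γ) (ω : Ω) {r : ℝ} (hr : r ≤ 0) : Bd γ r ω = 0 := by
  unfold Bd
  by_cases hg : GoodP (fun t => sqBessel4 γ t ω)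
  · simp only [hg, if_true]
    rw [tinv_nonpos (U_cont hγ ω) (fun t => U_nonneg t ω) hg hr, max_eq_right hr, Nn_zero hγ]
  · simp only [hg, if_false]

theorem Bd_clock (hγ : IsStdBMVec 4 P γ) {ω : Ω} (hg : GoodP (fun t => sqBessel4 γ t ω))
    {t : ℝ} (ht : 0 ≤ t) : Bd γ (∫ s in (0:ℝ)..t, sqBessel4 γ s ω) ω = Nn γ t ω := by
  unfold Bd
  simp only [hg, if_true]
  rw [← clk_of_nonneg (fun s => sqBessel4 γ s ω) ht,
    tinv_clk (U_cont hγ ω) (fun t => U_nonneg t ω) hg, max_eq_left ht]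

/-- discrete approximation of the time changed process -/
noncomputable def Sk (γ : ℝ → Ω → EuclideanSpace ℝ (Fin 4)) (r : ℝ) (k : ℕ) (ω : Ω) : ℝ :=
  ∑ j ∈ Finset.range (Jk k),
    (Iic r).indicator (fun _ => (1:ℝ)) (rsum (hk k) (fun t => sqBessel4 γ t ω) (j + 1)) *
      (Nn γ ((j + 1 : ℕ) * hk k) ω - Nn γ (j * hk k) ω)

theorem Sk_tendsto (hγ : IsStdBMVec 4 P γ) {ω : Ω} (hg : GoodP (fun t => sqBessel4 γ t ω))
    {r : ℝ} (hr : 0 ≤ r) : Tendsto (fun k => Sk γ r k ω) atTop (nhds (Bd γ r ω)) := by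
  have hc := U_cont hγ ω
  have hu : ∀ t, 0 ≤ sqBessel4 γ t ω := fun t => U_nonneg t ω
  have h := (sig_tendsto hc hu (clock_strictMono hc hu hg) (tinv_nonneg hc hu hg hr) hk_pos
    hk_tendsto Jk_tendsto).1
  rw [clock_tinv hc hu hg hr] at h
  have e : ∀ k, Sk γ r k ω =
      Nn γ (sig (hk k) (fun t => sqBessel4 γ t ω) (Jk k) r * hk k) ω := fun k => by
    unfold Sk
    rw [sum_sig (hk_pos k).le hu hr (Jk k) (fun j => Nn γ (j * hk k) ω)]
    simp [Nn_zero hγ]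
  simp_rw [e]
  have e2 : Bd γ r ω = Nn γ (tinv (fun t => sqBessel4 γ t ω) r) ω := by
    unfold Bd
    simp only [hg, if_true]
    rw [max_eq_left (tinv_nonneg hc hu hg hr)]
  rw [e2]
  exact ((Nn_cont hγ ω).tendsto _).comp h

theorem U_joint (hγ : IsStdBMVec 4 P γ) :
    Measurable fun p : Ω × ℝ => sqBessel4 γ p.2 p.1 := by
  have : Measurable (Function.uncurry (sqBessel4 γ)) :=
    measurable_uncurry_of_continuous_of_measurable (fun ω => U_cont hγ ω) (U_meas hγ)
  have e : (fun p : Ω × ℝ => sqBessel4 γ p.2 p.1) =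
      fun p : Ω × ℝ => Function.uncurry (sqBessel4 γ) (p.2, p.1) := rfl
  rw [e]
  exact Measurable.comp (g := Function.uncurry (sqBessel4 γ)) (f := fun p : Ω × ℝ => (p.2, p.1))
    this (measurable_snd.prodMk measurable_fst)

theorem A_meas (hγ : IsStdBMVec 4 P γ) {t : ℝ} (ht : 0 ≤ t) :
    Measurable fun ω => ∫ s in (0:ℝ)..t, sqBessel4 γ s ω := by
  simp_rw [intervalIntegral.integral_of_le ht]
  exact ((U_joint hγ).stronglyMeasurable.integral_prod_right
    (ν := volume.restrict (Ioc 0 t))).measurable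

theorem good_meas (hγ : IsStdBMVec 4 P γ) :
    MeasurableSet {ω | GoodP (fun t => sqBessel4 γ t ω)} := by
  have : {ω | GoodP (fun t => sqBessel4 γ t ω)} =
      (⋂ q : ℚ, ⋂ _ : 0 < q, {ω | 0 < sqBessel4 γ q ω}) ∩
      ⋂ n : ℕ, ⋃ m : ℕ, {ω | (n : ℝ) < ∫ s in (0:ℝ)..m, sqBessel4 γ s ω} := by
    ext ω; simp [GoodP]
  rw [this]
  refine MeasurableSet.inter ?_ ?_
  · exact MeasurableSet.iInter fun q => MeasurableSet.iInter fun _ =>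
      measurableSet_lt measurable_const (U_meas hγ _)
  · exact MeasurableSet.iInter fun n => MeasurableSet.iUnion fun m =>
      measurableSet_lt measurable_const (A_meas hγ (Nat.cast_nonneg m))

theorem Nn_meas (hγ : IsStdBMVec 4 P γ) (t : ℝ) : Measurable (Nn γ t) :=
  ((U_meas hγ t).sub_const _).div_const _

theorem rsum_meas' (hγ : IsStdBMVec 4 P γ) (h : ℝ) (m : ℕ) :
    Measurable fun ω => rsum h (fun t => sqBessel4 γ t ω) m :=
  sumF _ fun _ _ => mulF measurable_const (U_meas hγ _)

theorem Sk_meas (hγ : IsStdBMVec 4 P γ) (r : ℝ) (k : ℕ) : Measurable (Sk γ r k) := by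
  refine sumF _ fun j _ => mulF ?_ ((Nn_meas hγ _).sub (Nn_meas hγ _))
  exact (measurable_const.indicator measurableSet_Iic).comp (rsum_meas' hγ _ _)

theorem Bd_meas (hγ : IsStdBMVec 4 P γ) (r : ℝ) : Measurable (Bd γ r) := by
  rcases le_or_gt r 0 with hr | hr
  · have : Bd γ r = fun _ => 0 := funext fun ω => Bd_nonpos hγ ω hr
    rw [this]; exact measurable_const
  · refine measurable_of_tendsto_metrizable (f := fun k =>
      {ω | GoodP (fun t => sqBessel4 γ t ω)}.indicator (Sk γ r k))
      (fun k => (Sk_meas hγ r k).indicator (good_meas hγ)) ?_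
    rw [tendsto_pi_nhds]
    intro ω
    by_cases hg : GoodP (fun t => sqBessel4 γ t ω)
    · have : ∀ k, {ω | GoodP (fun t => sqBessel4 γ t ω)}.indicator (Sk γ r k) ω = Sk γ r k ω :=
        fun k => indicator_of_mem (by exact hg) _
      simp_rw [this]
      exact Sk_tendsto hγ hg hr.le
    · have : ∀ k, {ω | GoodP (fun t => sqBessel4 γ t ω)}.indicator (Sk γ r k) ω = 0 :=
        fun k => indicator_of_notMem (by exact hg) _
      simp_rw [this]
      have e2 : Bd γ r ω = 0 := by
        unfold Bd
        simp only [hg, if_false]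
      rw [e2]
      exact tendsto_const_nhds

theorem U_pos_ae (hγ : IsStdBMVec 4 P γ) {q : ℝ} (hq : 0 < q) : ∀ᵐ ω ∂P, 0 < sqBessel4 γ q ω := by
  have h1 := incr_law1 hγ le_rfl hq.le 0
  have hm : Measurable fun ω => incr γ 0 q ω 0 := (measurable_pi_apply 0).comp (meas_incr hγ 0 q)
  have hv : (q - 0).toNNReal ≠ 0 := by simpa using hq
  have := nullSingletonClass_gaussianReal (μ := 0) hv
  have h2 : ∀ᵐ x ∂(P.map fun ω => incr γ 0 q ω 0), x ≠ 0 := by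
    rw [h1, ae_iff]; simpa using measure_singleton (μ := gaussianReal 0 (q - 0).toNNReal) 0
  have h3 := ae_of_ae_map hm.aemeasurable h2
  filter_upwards [h3] with ω hω
  rw [U_eq]
  have e : incr γ 0 q ω 0 = γ q ω 0 := by simp [incr, (hγ.coord 0).start ω]
  rw [e] at hω
  exact Finset.sum_pos' (fun i _ => sq_nonneg _) ⟨0, Finset.mem_univ _, by positivity⟩

theorem U_small (hγ : IsStdBMVec 4 P γ) {s : ℝ} (hs : 1 ≤ s) {δ : ℝ} (hδ : 0 < δ) :
    P {ω | sqBessel4 γ s ω ≤ δ ^ 2} ≤ ENNReal.ofReal (2 * δ) := by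
  have h0 : 0 ≤ s := by linarith
  have h1 := incr_law1 hγ le_rfl h0 0
  have hm : Measurable fun ω => incr γ 0 s ω 0 := (measurable_pi_apply 0).comp (meas_incr hγ 0 s)
  have hv : (s - 0).toNNReal ≠ 0 := by simp; linarith
  calc P {ω | sqBessel4 γ s ω ≤ δ ^ 2} ≤ P ((fun ω => incr γ 0 s ω 0) ⁻¹' Icc (-δ) δ) := by
        refine measure_mono fun ω hω => ?_
        have e : incr γ 0 s ω 0 = γ s ω 0 := by simp [incr, (hγ.coord 0).start ω]
        simp only [mem_ofPred_eq] at hω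
        rw [U_eq] at hω
        have : (γ s ω 0) ^ 2 ≤ δ ^ 2 := (Finset.single_le_sum (f := fun i => (γ s ω i) ^ 2)
          (fun i _ => sq_nonneg _) (Finset.mem_univ 0)).trans hω
        simp only [mem_preimage, e]
        exact abs_le.1 (abs_le_of_sq_le_sq this hδ.le)
    _ = gaussianReal 0 (s - 0).toNNReal (Icc (-δ) δ) := by
        rw [← h1, Measure.map_apply hm measurableSet_Icc]
    _ ≤ ∫⁻ _ in Icc (-δ) δ, 1 := by
        rw [gaussianReal_apply _ hv]
        refine lintegral_mono fun x => ?_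
        rw [gaussianPDF, ENNReal.ofReal_le_one, gaussianPDFReal]
        have hx : Real.exp (-(x - 0) ^ 2 / (2 * (s - 0).toNNReal)) ≤ 1 := by
          rw [Real.exp_le_one_iff]
          apply div_nonpos_of_nonpos_of_nonneg
          · nlinarith [sq_nonneg (x - 0)]
          · positivity
        have hy : (√(2 * π * (s - 0).toNNReal))⁻¹ ≤ 1 := by
          apply inv_le_one_of_one_le₀
          rw [Real.one_le_sqrt, Real.coe_toNNReal _ (by linarith)]
          nlinarith [Real.pi_gt_three]
        exact mul_le_one₀ hy (Real.exp_pos _).le hx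
    _ = ENNReal.ofReal (2 * δ) := by
        rw [setLIntegral_one, Real.volume_Icc]; congr 1; ring

theorem A_infty (hγ : IsStdBMVec 4 P γ) (n : ℕ) :
    P {ω | ∀ m : ℕ, ∫ s in (0:ℝ)..m, sqBessel4 γ s ω ≤ n} = 0 := by
  set F := {ω | ∀ m : ℕ, ∫ s in (0:ℝ)..m, sqBessel4 γ s ω ≤ n} with hF
  have hFm : MeasurableSet F := by
    rw [hF, ofPred_forall]
    exact MeasurableSet.iInter fun m => measurableSet_le (A_meas hγ (Nat.cast_nonneg m))
      measurable_const
  by_contra hp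
  have hp' : 0 < P.real F := by
    rw [Measure.real, ENNReal.toReal_pos_iff]
    exact ⟨pos_iff_ne_zero.2 hp, measure_lt_top _ _⟩
  set p := P.real F with hpd
  set δ := p / 4 with hδd
  have hδ : 0 < δ := by positivity
  have low : ∀ s : ℝ, 1 ≤ s → ENNReal.ofReal (δ ^ 2 * (p / 2)) ≤
      ∫⁻ ω in F, ENNReal.ofReal (sqBessel4 γ s ω) ∂P := by
    intro s hs
    set G := {ω | sqBessel4 γ s ω ≤ δ ^ 2} with hG
    have hGm : MeasurableSet G := measurableSet_le (U_meas hγ s) measurable_const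
    have hGs := U_small hγ hs hδ
    have hG' : P.real G ≤ 2 * δ := by
      rw [Measure.real]; exact ENNReal.toReal_le_of_le_ofReal (by positivity) hGs
    have hFG : p / 2 ≤ P.real (F \ G) := by
      have : P.real F ≤ P.real (F \ G) + P.real G := by
        refine (measureReal_mono ?_).trans (measureReal_union_le _ _)
        intro ω h; by_cases hh : ω ∈ G <;> simp [h, hh]
      linarith
    calc ENNReal.ofReal (δ ^ 2 * (p / 2)) ≤ ENNReal.ofReal (δ ^ 2) * P (F \ G) := by
          rw [ENNReal.ofReal_mul (by positivity)]
          gcongr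
          rw [← ofReal_measureReal]
          exact ENNReal.ofReal_le_ofReal hFG
      _ = ∫⁻ ω in F \ G, ENNReal.ofReal (δ ^ 2) ∂P := by simp
      _ ≤ ∫⁻ ω in F \ G, ENNReal.ofReal (sqBessel4 γ s ω) ∂P := by
          refine setLIntegral_mono' (hFm.diff hGm) fun ω hω => ENNReal.ofReal_le_ofReal ?_
          exact (not_le.1 hω.2).le
      _ ≤ _ := lintegral_mono_set sdiff_subset
  have main : ∀ m : ℕ, (m : ℝ) * (δ ^ 2 * (p / 2)) ≤ n := by
    intro m
    have h1 : ∫⁻ ω in F, ENNReal.ofReal (∫ s in (0:ℝ)..(m + 1 : ℕ), sqBessel4 γ s ω) ∂P ≤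
        ENNReal.ofReal n := by
      calc _ ≤ ∫⁻ ω in F, ENNReal.ofReal n ∂P :=
            setLIntegral_mono' hFm fun ω hω => ENNReal.ofReal_le_ofReal (hω _)
        _ = ENNReal.ofReal n * P F := by simp
        _ ≤ _ := by
          conv_rhs => rw [← mul_one (ENNReal.ofReal n)]
          gcongr; exact prob_le_one
    have h2 : ∀ ω, ENNReal.ofReal (∫ s in (0:ℝ)..(m + 1 : ℕ), sqBessel4 γ s ω) =
        ∫⁻ s in Ioc (0:ℝ) (m + 1 : ℕ), ENNReal.ofReal (sqBessel4 γ s ω) := fun ω => by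
      rw [intervalIntegral.integral_of_le (Nat.cast_nonneg _), ofReal_integral_eq_lintegral_ofReal]
      · exact ((U_cont hγ ω).integrableOn_Icc).mono_set Ioc_subset_Icc_self
      · exact ae_of_all _ fun s => U_nonneg s ω
    simp_rw [h2] at h1
    rw [lintegral_lintegral_swap (by
      exact ((U_joint hγ).ennreal_ofReal).aemeasurable)] at h1
    have h3 : ENNReal.ofReal (m * (δ ^ 2 * (p / 2))) ≤ ENNReal.ofReal n := by
      calc ENNReal.ofReal (m * (δ ^ 2 * (p / 2)))
          = ∫⁻ s in Ioc (1:ℝ) (m + 1 : ℕ), ENNReal.ofReal (δ ^ 2 * (p / 2)) := by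
            rw [setLIntegral_const, Real.volume_Ioc, mul_comm, ENNReal.ofReal_mul (by positivity)]
            simp
        _ ≤ ∫⁻ s in Ioc (1:ℝ) (m + 1 : ℕ), ∫⁻ ω in F, ENNReal.ofReal (sqBessel4 γ s ω) ∂P :=
            setLIntegral_mono' measurableSet_Ioc fun s hs => low s hs.1.le
        _ ≤ ∫⁻ s in Ioc (0:ℝ) (m + 1 : ℕ), ∫⁻ ω in F, ENNReal.ofReal (sqBessel4 γ s ω) ∂P :=
            lintegral_mono_set (Ioc_subset_Ioc_left zero_le_one)
        _ ≤ _ := h1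
    exact (ENNReal.ofReal_le_ofReal_iff (Nat.cast_nonneg n)).1 h3
  have hpos : 0 < δ ^ 2 * (p / 2) := by positivity
  obtain ⟨m, hm⟩ := exists_nat_gt ((n : ℝ) / (δ ^ 2 * (p / 2)))
  rw [div_lt_iff₀ hpos] at hm
  exact absurd (main m) (not_le.2 hm)

theorem good_ae (hγ : IsStdBMVec 4 P γ) : ∀ᵐ ω ∂P, GoodP (fun t => sqBessel4 γ t ω) := by
  have h1 : ∀ᵐ ω ∂P, ∀ q : ℚ, 0 < q → 0 < sqBessel4 γ q ω := by
    rw [ae_all_iff]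
    intro q
    by_cases hq : 0 < q
    · filter_upwards [U_pos_ae hγ (q := (q : ℝ)) (by exact_mod_cast hq)] with ω hω _ using hω
    · exact ae_of_all _ fun ω h => absurd h hq
  have h2 : ∀ᵐ ω ∂P, ∀ n : ℕ, ∃ m : ℕ, (n : ℝ) < ∫ s in (0:ℝ)..m, sqBessel4 γ s ω := by
    rw [ae_all_iff]
    intro n
    rw [ae_iff]
    simpa using A_infty hγ n
  filter_upwards [h1, h2] with ω a b using ⟨a, b⟩

end


/-! ### Part 6: the time changed process is a Brownian motion -/

/-- step function -/
noncomputable def stepf {n : ℕ} (t : Fin (n + 1) → ℝ) (l : Fin n → ℝ) (x : ℝ) : ℝ :=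
  ∑ i : Fin n, l i * (Ioc (t i.castSucc) (t i.succ)).indicator (fun _ => (1:ℝ)) x

theorem ind_Ioc {a b : ℝ} (hab : a ≤ b) (x : ℝ) :
    (Ioc a b).indicator (fun _ => (1:ℝ)) x =
      (Iic b).indicator (fun _ => (1:ℝ)) x - (Iic a).indicator (fun _ => (1:ℝ)) x := by
  by_cases h1 : x ≤ a
  · simp [h1, h1.trans hab, indicator]
  · by_cases h2 : x ≤ b <;> simp [h1, h2, indicator, not_le.1 h1]

theorem stepf_meas {n : ℕ} (t : Fin (n + 1) → ℝ) (l : Fin n → ℝ) : Measurable (stepf t l) :=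
  sumF _ fun _ _ => mulF measurable_const (measurable_const.indicator measurableSet_Ioc)

theorem stepf_bdd {n : ℕ} (t : Fin (n + 1) → ℝ) (l : Fin n → ℝ) (x : ℝ) :
    |stepf t l x| ≤ ∑ i, |l i| := by
  refine (Finset.abs_sum_le_sum_abs _ _).trans (Finset.sum_le_sum fun i _ => ?_)
  rw [abs_mul]
  refine mul_le_of_le_one_right (abs_nonneg _) ?_
  by_cases h : x ∈ Ioc (t i.castSucc) (t i.succ) <;> simp [h]

theorem stepf_zero {n : ℕ} {t : Fin (n + 1) → ℝ} (ht : Monotone t) (l : Fin n → ℝ) {x : ℝ}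
    (hx : t (Fin.last n) < x) : stepf t l x = 0 := by
  refine Finset.sum_eq_zero fun i _ => ?_
  rw [indicator_of_notMem, mul_zero]
  intro h
  exact absurd (h.2.trans (ht (Fin.le_last _))) (not_le.2 hx)

theorem stepf_sq {n : ℕ} {t : Fin (n + 1) → ℝ} (ht : Monotone t) (l : Fin n → ℝ) (x : ℝ) :
    stepf t l x ^ 2 =
      ∑ i : Fin n, l i ^ 2 * (Ioc (t i.castSucc) (t i.succ)).indicator (fun _ => (1:ℝ)) x := by
  unfold stepf
  rw [pow_two, Finset.sum_mul_sum]
  refine Finset.sum_congr rfl fun i _ => ?_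
  rw [Finset.sum_eq_single i]
  · by_cases h : x ∈ Ioc (t i.castSucc) (t i.succ) <;> simp [h, pow_two]
  · intro j _ hj
    by_cases h : x ∈ Ioc (t i.castSucc) (t i.succ)
    · have h2 : x ∉ Ioc (t j.castSucc) (t j.succ) := by
        intro h2
        rcases lt_or_gt_of_ne hj with hlt | hlt
        · have : t j.succ ≤ t i.castSucc := ht (by
            rw [Fin.le_def]; simp; exact hlt)
          linarith [h.1, h2.2]
        · have : t i.succ ≤ t j.castSucc := ht (by
            rw [Fin.le_def]; simp; exact hlt)
          linarith [h2.1, h.2]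
      simp [h2]
    · simp [h]
  · simp

section
variable {Ω : Type*} [MeasurableSpace Ω] {P : Measure Ω} [IsProbabilityMeasure P]
variable {γ : ℝ → Ω → EuclideanSpace ℝ (Fin 4)}

theorem step_sum {n : ℕ} {t : Fin (n + 1) → ℝ} (ht : Monotone t) (l : Fin n → ℝ) (J : ℕ)
    (q f : ℕ → ℝ) :
    ∑ j ∈ Finset.range J, (∑ i : Fin n, l i *
      (Ioc (t i.castSucc) (t i.succ)).indicator (fun _ => (1:ℝ)) (q j)) * f j =
    ∑ i : Fin n, l i * (∑ j ∈ Finset.range J, (Iic (t i.succ)).indicator (fun _ => (1:ℝ)) (q j) * f j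
      - ∑ j ∈ Finset.range J, (Iic (t i.castSucc)).indicator (fun _ => (1:ℝ)) (q j) * f j) := by
  simp_rw [Finset.sum_mul]
  rw [Finset.sum_comm]
  refine Finset.sum_congr rfl fun i _ => ?_
  rw [← Finset.sum_sub_distrib, Finset.mul_sum]
  refine Finset.sum_congr rfl fun j _ => ?_
  rw [ind_Ioc (ht (Fin.castSucc_le_succ i))]
  ring

theorem lsum_esum {n : ℕ} {t : Fin (n + 1) → ℝ} (ht : Monotone t) (l : Fin n → ℝ) (k : ℕ) (ω : Ω) :
    lsum (stepf t l) (hk k) γ (Jk k) ω + esum (stepf t l) (hk k) γ (Jk k) ω =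
      ∑ i : Fin n, l i * (Sk γ (t i.succ) k ω - Sk γ (t i.castSucc) k ω) := by
  unfold Sk
  rw [← step_sum ht l (Jk k) (fun j => rsum (hk k) (fun t => sqBessel4 γ t ω) (j + 1))
    (fun j => Nn γ ((j + 1 : ℕ) * hk k) ω - Nn γ (j * hk k) ω)]
  rw [lsum, esum, ← Finset.sum_add_distrib]
  refine Finset.sum_congr rfl fun j _ => ?_
  rw [← mul_add]
  unfold stepf
  congr 1
  have := U_diff (γ := γ) (j * hk k) ((j + 1 : ℕ) * hk k) ω
  simp only [Nn, eta]
  linarith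

theorem vsum_eq {n : ℕ} {t : Fin (n + 1) → ℝ} (ht : Monotone t) (h0 : ∀ i, 0 ≤ t i)
    (l : Fin n → ℝ) {h : ℝ} (hh : 0 ≤ h) {u : ℝ → ℝ} (hu : ∀ s, 0 ≤ u s) (J : ℕ) :
    vsum (stepf t l) h u J = ∑ i : Fin n, l i ^ 2 *
      (rsum h u (sig h u J (t i.succ)) - rsum h u (sig h u J (t i.castSucc))) := by
  unfold vsum
  simp_rw [stepf_sq ht]
  rw [step_sum ht (fun i => l i ^ 2) J (fun j => rsum h u (j + 1)) (fun j => h * u (j * h))]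
  refine Finset.sum_congr rfl fun i _ => ?_
  have e : ∀ j : ℕ, h * u (j * h) = rsum h u (j + 1) - rsum h u j := fun j => by
    rw [rsum_succ]; ring
  simp_rw [e]
  rw [sum_sig hh hu (h0 _), sum_sig hh hu (h0 _)]
  simp

theorem abs_le_L2 {f : Ω → ℝ} (hf : ML P f) : ∫ ω, |f ω| ∂P ≤ √(∫ ω, f ω ^ 2 ∂P) := by
  apply Real.le_sqrt_of_sq_le
  have h2 : MemLp (fun ω => |f ω|) 2 P := by
    have := (hf 2).norm
    simpa using this
  have := variance_nonneg (fun ω => |f ω|) P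
  rw [variance_eq_sub h2] at this
  simp only [Pi.pow_apply, sq_abs] at this
  linarith

theorem tendsto_expF {f g : ℕ → ℝ} {a b : ℝ} (hf : Tendsto f atTop (nhds a))
    (hg : Tendsto g atTop (nhds b)) :
    Tendsto (fun k => ((Real.exp (f k / 2) : ℝ) : ℂ) * Complex.exp ((g k : ℂ) * Complex.I)) atTop
      (nhds (((Real.exp (a / 2) : ℝ) : ℂ) * Complex.exp ((b : ℂ) * Complex.I))) := by
  have h1 : Continuous fun x : ℝ => ((Real.exp (x / 2) : ℝ) : ℂ) := by fun_prop
  have h2 : Continuous fun x : ℝ => Complex.exp ((x : ℂ) * Complex.I) := by fun_prop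
  exact ((h1.tendsto a).comp hf).mul ((h2.tendsto b).comp hg)

set_option maxHeartbeats 1000000 in
theorem char_joint (hγ : IsStdBMVec 4 P γ) {n : ℕ} {t : Fin (n + 1) → ℝ} (ht : Monotone t)
    (h0 : ∀ i, 0 ≤ t i) (l : Fin n → ℝ) :
    ∫ ω, Complex.exp (((∑ i : Fin n, l i * (Bd γ (t i.succ) ω - Bd γ (t i.castSucc) ω) : ℝ) : ℂ) *
      Complex.I) ∂P =
      ((Real.exp (-(∑ i : Fin n, l i ^ 2 * (t i.succ - t i.castSucc)) / 2) : ℝ) : ℂ) := by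
  set v := ∑ i : Fin n, l i ^ 2 * (t i.succ - t i.castSucc) with hv
  set Θ := stepf t l with hΘd
  set K := ∑ i, |l i| with hKd
  set R := t (Fin.last n) with hRd
  have hΘm : Measurable Θ := stepf_meas t l
  have hK : ∀ x, |Θ x| ≤ K := stepf_bdd t l
  have hΘ : ∀ x, R < x → Θ x = 0 := fun x hx => stepf_zero ht l hx
  have hR : 0 ≤ R := h0 _
  set M := Real.exp (K ^ 2 * R / 2) with hM
  let V : ℕ → Ω → ℝ := fun k ω => vsum Θ (hk k) (fun t => sqBessel4 γ t ω) (Jk k)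
  let L : ℕ → Ω → ℝ := fun k ω => lsum Θ (hk k) γ (Jk k) ω
  let E : ℕ → Ω → ℝ := fun k ω => esum Θ (hk k) γ (Jk k) ω
  have hVm : ∀ k, Measurable (V k) := fun k =>
    (vsum_meas hΘm (hk_pos k).le (Jk k)).mono (pastF_le hγ _) le_rfl
  have hLm : ∀ k, Measurable (L k) := fun k =>
    (lsum_meas hΘm (hk_pos k).le (Jk k)).mono (pastF_le hγ _) le_rfl
  have hEm : ∀ k, Measurable (E k) := fun k =>
    (esum_meas hΘm (hk_pos k).le (Jk k)).mono (pastF_le hγ _) le_rfl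
  have hVb : ∀ k ω, Real.exp (V k ω / 2) ≤ M := fun k ω => by
    have := (vsum_bound hR hK hΘ (hk_pos k).le (fun t => U_nonneg (γ := γ) t ω) (Jk k)).2
    simp only [hM]
    gcongr
  let Z : ℕ → Ω → ℂ := fun k ω => ((Real.exp (V k ω / 2) : ℝ) : ℂ) *
    Complex.exp ((L k ω : ℂ) * Complex.I)
  let Z' : ℕ → Ω → ℂ := fun k ω => ((Real.exp (V k ω / 2) : ℝ) : ℂ) *
    Complex.exp (((L k ω + E k ω : ℝ) : ℂ) * Complex.I)
  have hZm : ∀ k, Measurable (Z k) := fun k => expF (hVm k) (hLm k)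
  have hZm' : ∀ k, Measurable (Z' k) := fun k => expF (hVm k) ((hLm k).add (hEm k))
  have hZb : ∀ k ω, ‖Z k ω‖ ≤ M := fun k ω => by
    simp only [Z]
    rw [norm_mul, Complex.norm_exp_ofReal_mul_I, mul_one, Complex.norm_real,
        Real.norm_of_nonneg (Real.exp_pos _).le]
    exact hVb k ω
  have hZb' : ∀ k ω, ‖Z' k ω‖ ≤ M := fun k ω => by
    simp only [Z']
    rw [norm_mul, Complex.norm_exp_ofReal_mul_I, mul_one, Complex.norm_real,
        Real.norm_of_nonneg (Real.exp_pos _).le]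
    exact hVb k ω
  have hZ1 : ∀ k, ∫ ω, Z k ω ∂P = 1 := fun k => exp_mart hγ hΘm hR hK hΘ (hk_pos k).le (Jk k)
  have hZint : ∀ k, Integrable (Z k) P := fun k =>
    Integrable.of_bound (hZm k).aestronglyMeasurable M (ae_of_all _ (hZb k))
  have hZint' : ∀ k, Integrable (Z' k) P := fun k =>
    Integrable.of_bound (hZm' k).aestronglyMeasurable M (ae_of_all _ (hZb' k))
  have hM0 : 0 ≤ M := (Real.exp_pos _).le
  have hdiff : ∀ k, ‖∫ ω, Z' k ω ∂P - 1‖ ≤ M * √(K ^ 2 * (c4 + 16) * (1 / ((k : ℝ) + 1))) := by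
    intro k
    have hE2 := esum_L2 hγ hΘm hK (hk_pos k).le (Jk k)
    rw [← hZ1 k, ← integral_sub (hZint' k) (hZint k)]
    calc ‖∫ ω, (Z' k ω - Z k ω) ∂P‖ ≤ ∫ ω, ‖Z' k ω - Z k ω‖ ∂P := norm_integral_le_integral_norm _
      _ ≤ ∫ ω, M * |E k ω| ∂P := by
          refine integral_mono ((hZint' k).sub (hZint k)).norm
            ((hE2.1.integrable.abs).const_mul M) fun ω => ?_
          have e : Z' k ω - Z k ω = Z k ω * (Complex.exp (Complex.I * (E k ω : ℝ)) - 1) := by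
            simp only [Z, Z']
            rw [mul_sub, mul_one, mul_assoc, ← Complex.exp_add]
            congr 3
            push_cast; ring
          simp only
          rw [e, norm_mul]
          exact mul_le_mul (hZb k ω) Real.norm_exp_I_mul_ofReal_sub_one_le (norm_nonneg _) hM0
      _ = M * ∫ ω, |E k ω| ∂P := integral_const_mul _ _
      _ ≤ M * √(K ^ 2 * (c4 + 16) * (1 / ((k : ℝ) + 1))) := by
          refine mul_le_mul_of_nonneg_left ((abs_le_L2 hE2.1).trans (Real.sqrt_le_sqrt ?_)) hM0
          refine hE2.2.trans (le_of_eq ?_)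
          rw [← Jk_sq k]; ring
  have hlim1 : Tendsto (fun k => ∫ ω, Z' k ω ∂P) atTop (nhds 1) := by
    rw [tendsto_iff_norm_sub_tendsto_zero]
    refine squeeze_zero (fun _ => norm_nonneg _) hdiff ?_
    have h1 := (tendsto_one_div_add_atTop_nhds_zero_nat (𝕜 := ℝ)).const_mul (K ^ 2 * (c4 + 16))
    have h2 := (h1.sqrt).const_mul M
    simpa using h2
  have hlim2 : Tendsto (fun k => ∫ ω, Z' k ω ∂P) atTop (nhds (∫ ω, ((Real.exp (v / 2) : ℝ) : ℂ) *
      Complex.exp (((∑ i : Fin n, l i * (Bd γ (t i.succ) ω - Bd γ (t i.castSucc) ω) : ℝ) : ℂ) *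
      Complex.I) ∂P)) := by
    refine tendsto_integral_of_dominated_convergence (fun _ => M)
      (fun k => (hZm' k).aestronglyMeasurable) (integrable_const _)
      (fun k => ae_of_all _ (hZb' k)) ?_
    filter_upwards [good_ae hγ] with ω hg
    have hc := U_cont hγ ω
    have hu : ∀ t, 0 ≤ sqBessel4 γ t ω := fun t => U_nonneg t ω
    have hq : ∀ r, 0 ≤ r → Tendsto (fun k => rsum (hk k) (fun t => sqBessel4 γ t ω)
        (sig (hk k) (fun t => sqBessel4 γ t ω) (Jk k) r)) atTop (nhds r) := by
      intro r hr
      have := (sig_tendsto hc hu (clock_strictMono hc hu hg) (tinv_nonneg hc hu hg hr) hk_pos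
        hk_tendsto Jk_tendsto).2
      rwa [clock_tinv hc hu hg hr] at this
    have hV : Tendsto (fun k => V k ω) atTop (nhds v) := by
      have : ∀ k, V k ω = _ := fun k => vsum_eq ht h0 l (hk_pos k).le hu (Jk k)
      simp_rw [this]
      exact tendsto_finsetSum _ fun i _ => ((hq _ (h0 _)).sub (hq _ (h0 _))).const_mul _
    have hL : Tendsto (fun k => L k ω + E k ω) atTop
        (nhds (∑ i : Fin n, l i * (Bd γ (t i.succ) ω - Bd γ (t i.castSucc) ω))) := by
      have : ∀ k, L k ω + E k ω = _ := fun k => lsum_esum ht l k ω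
      simp_rw [this]
      exact tendsto_finsetSum _ fun i _ =>
        ((Sk_tendsto hγ hg (h0 _)).sub (Sk_tendsto hγ hg (h0 _))).const_mul _
    exact tendsto_expF hV hL
  have := tendsto_nhds_unique hlim2 hlim1
  rw [integral_const_mul] at this
  have hne : ((Real.exp (v / 2) : ℝ) : ℂ) ≠ 0 := by
    exact_mod_cast (Real.exp_pos _).ne'
  rw [eq_comm, ← mul_right_inj' hne, this, ← Complex.ofReal_mul, ← Real.exp_add]
  have : v / 2 + -v / 2 = 0 := by ring
  rw [this]; simp

theorem char_one (hγ : IsStdBMVec 4 P γ) {s t : ℝ} (hs : 0 ≤ s) (hst : s ≤ t) (l : ℝ) :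
    charFun (P.map fun ω => Bd γ t ω - Bd γ s ω) l =
      ((Real.exp (-(l ^ 2 * (t - s)) / 2) : ℝ) : ℂ) := by
  have hm : Measurable fun ω => Bd γ t ω - Bd γ s ω := (Bd_meas hγ t).sub (Bd_meas hγ s)
  rw [charFun_apply_real, integral_map hm.aemeasurable (by fun_prop)]
  have h := char_joint hγ (n := 1) (t := ![s, t]) (by
    intro i j hij
    fin_cases i <;> fin_cases j <;> simp_all) (by
    intro i; fin_cases i <;> simp <;> linarith) (fun _ => l)
  simp only [Fin.sum_univ_one] at h
  simpa using h

theorem Bd_isStdBM (hγ : IsStdBMVec 4 P γ) : IsStdBM P (Bd γ) where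
  measurable := Bd_meas hγ
  start ω := Bd_nonpos hγ ω le_rfl
  cont := Bd_cont hγ
  indep n t h0 ht := by
    have hm : ∀ i : Fin n, Measurable fun ω => Bd γ (t i.succ) ω - Bd γ (t i.castSucc) ω :=
      fun i => (Bd_meas hγ _).sub (Bd_meas hγ _)
    rw [iIndepFun_iff_charFun_pi fun i => (hm i).aemeasurable]
    intro l
    have e : ∀ i : Fin n, charFun (P.map fun ω => Bd γ (t i.succ) ω - Bd γ (t i.castSucc) ω) (l i)
        = ((Real.exp (-((l i) ^ 2 * (t i.succ - t i.castSucc)) / 2) : ℝ) : ℂ) := fun i =>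
      char_one hγ (h0 _) (ht (Fin.castSucc_le_succ i)) (l i)
    simp_rw [e]
    rw [← Complex.ofReal_prod, ← Real.exp_sum]
    have h := char_joint hγ ht h0 (fun i => l i)
    have hm2 : Measurable fun ω => WithLp.toLp 2 fun i : Fin n =>
        Bd γ (t i.succ) ω - Bd γ (t i.castSucc) ω :=
      (WithLp.measurable_toLp 2 (Fin n → ℝ)).comp (measurable_pi_lambda _ hm)
    rw [charFun_apply, integral_map hm2.aemeasurable (by fun_prop)]
    rw [← Finset.sum_div, Finset.sum_neg_distrib, ← h]
    congr 1
  gauss s t hs hst := by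
    have hm : Measurable fun ω => Bd γ t ω - Bd γ s ω := (Bd_meas hγ t).sub (Bd_meas hγ s)
    have := Measure.isProbabilityMeasure_map (μ := P) hm.aemeasurable
    apply Measure.ext_of_charFun
    ext l
    rw [char_one hγ hs hst, charFun_gaussianReal, Real.coe_toNNReal _ (by linarith)]
    push_cast
    congr 1
    ring

end


/-! ### Part 7: no drawdown events -/

/-- No unit drawdown before time `t`. -/
def NoDD (u : ℝ → ℝ) (t : ℝ) : Prop := ∀ a b, 0 ≤ a → a ≤ b → b ≤ t → u a - u b < 1

/-- clamp to the unit interval -/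
noncomputable def cl (x : ℝ) : ℝ := max 0 (min 1 x)

theorem cl_nonneg (x : ℝ) : 0 ≤ cl x := le_max_left _ _
theorem cl_le (x : ℝ) : cl x ≤ 1 := max_le zero_le_one (min_le_left _ _)
theorem cl_eq {x : ℝ} (h0 : 0 ≤ x) (h1 : x ≤ 1) : cl x = x := by simp [cl, h0, h1]
theorem cl_cont : Continuous cl := by unfold cl; fun_prop

theorem NoDD_iff {u : ℝ → ℝ} (hc : Continuous u) {t : ℝ} (ht : 0 ≤ t) :
    NoDD u t ↔ ∃ n : ℕ, ∀ p : ℚ × ℚ,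
      u (t * cl p.2 * cl p.1) - u (t * cl p.2) ≤ 1 - 1 / ((n : ℝ) + 1) := by
  let F : ℝ × ℝ → ℝ := fun p => u (t * cl p.2 * cl p.1) - u (t * cl p.2)
  have hF : Continuous F := by
    have := cl_cont
    simp only [F]; fun_prop
  constructor
  · intro h
    obtain ⟨p, -, hp⟩ := (isCompact_Icc.prod isCompact_Icc : IsCompact
      (Icc (0:ℝ) 1 ×ˢ Icc (0:ℝ) 1)).exists_isMaxOn
      ⟨(0, 0), by simp⟩ hF.continuousOn
    have hlt : F p < 1 := by
      refine h _ _ ?_ ?_ ?_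
      · exact mul_nonneg (mul_nonneg ht (cl_nonneg _)) (cl_nonneg _)
      · exact mul_le_of_le_one_right (mul_nonneg ht (cl_nonneg _)) (cl_le _)
      · exact mul_le_of_le_one_right ht (cl_le _)
    obtain ⟨n, hn⟩ := exists_nat_one_div_lt (sub_pos.2 hlt)
    refine ⟨n, fun r => ?_⟩
    have h1 : F (cl r.1, cl r.2) ≤ F p :=
      hp (show (cl r.1, cl r.2) ∈ Icc (0:ℝ) 1 ×ˢ Icc (0:ℝ) 1 from
        ⟨⟨cl_nonneg _, cl_le _⟩, ⟨cl_nonneg _, cl_le _⟩⟩)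
    simp only [F] at h1 hn ⊢
    rw [cl_eq (cl_nonneg r.1) (cl_le _), cl_eq (cl_nonneg r.2) (cl_le _)] at h1
    linarith
  · rintro ⟨n, hn⟩ a b ha hab hb
    have hall : ∀ p : ℝ × ℝ, F p ≤ 1 - 1 / ((n : ℝ) + 1) := by
      have hd : DenseRange (Prod.map ((↑) : ℚ → ℝ) ((↑) : ℚ → ℝ)) :=
        Rat.denseRange_cast.prodMap Rat.denseRange_cast
      intro p
      refine hd.induction_on p (isClosed_le hF continuous_const) fun q => ?_
      exact hn q
    have hn0 : 0 < 1 / ((n : ℝ) + 1) := by positivity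
    rcases (ha.trans hab).eq_or_lt with hb0 | hb0
    · have : a = b := by linarith
      rw [this]; simp
    · have ht0 : 0 < t := hb0.trans_le hb
      have := hall (a / b, b / t)
      simp only [F] at this
      rw [cl_eq (by positivity) ((div_le_one ht0).2 hb), cl_eq (by positivity)
        ((div_le_one hb0).2 hab), mul_div_cancel₀ _ ht0.ne', mul_div_cancel₀ _ hb0.ne'] at this
      linarith

theorem NoDD.mono {u : ℝ → ℝ} {s t : ℝ} (hst : s ≤ t) (h : NoDD u t) : NoDD u s :=
  fun a b ha hab hb => h a b ha hab (hb.trans hst)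

section
variable {Ω : Type*} [MeasurableSpace Ω] {P : Measure Ω} [IsProbabilityMeasure P]
variable {γ : ℝ → Ω → EuclideanSpace ℝ (Fin 4)}

theorem iUF {Ω : Type*} {m : MeasurableSpace Ω} {S : ℕ → ℚ × ℚ → Set Ω}
    (h : ∀ n p, MeasurableSet[m] (S n p)) : MeasurableSet[m] (⋃ n, ⋂ p, S n p) :=
  MeasurableSet.iUnion fun n => MeasurableSet.iInter fun p => h n p

theorem leF {Ω : Type*} {m : MeasurableSpace Ω} {f : Ω → ℝ} (hf : Measurable[m] f) (c : ℝ) :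
    MeasurableSet[m] {ω | f ω ≤ c} := measurableSet_le hf measurable_const

/-- No drawdown event -/
def Et (γ : ℝ → Ω → EuclideanSpace ℝ (Fin 4)) (t : ℝ) : Set Ω :=
  {ω | NoDD (fun s => sqBessel4 γ s ω) t}

theorem Et_measF (hγ : IsStdBMVec 4 P γ) {t : ℝ} (ht : 0 ≤ t) :
    MeasurableSet[pastF γ t] (Et γ t) := by
  have : Et γ t = ⋃ n : ℕ, ⋂ p : ℚ × ℚ, {ω | sqBessel4 γ (t * cl p.2 * cl p.1) ω -
      sqBessel4 γ (t * cl p.2) ω ≤ 1 - 1 / ((n : ℝ) + 1)} := by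
    ext ω
    simp only [Et, mem_iUnion, mem_iInter]
    exact NoDD_iff (U_cont hγ ω) ht
  rw [this]
  refine iUF fun n p => leF (subF (U_measF ?_ ?_) (U_measF ?_ ?_)) _
  · exact mul_nonneg (mul_nonneg ht (cl_nonneg _)) (cl_nonneg _)
  · exact (mul_le_of_le_one_right (mul_nonneg ht (cl_nonneg _)) (cl_le _)).trans
      (mul_le_of_le_one_right ht (cl_le _))
  · exact mul_nonneg ht (cl_nonneg _)
  · exact mul_le_of_le_one_right ht (cl_le _)

theorem Et_anti {s t : ℝ} (hst : s ≤ t) : Et γ t ⊆ Et γ s := fun _ h => NoDD.mono hst h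

theorem Et_meas (hγ : IsStdBMVec 4 P γ) {t : ℝ} (ht : 0 ≤ t) : MeasurableSet (Et γ t) :=
  pastF_le hγ t _ (Et_measF hγ ht)

theorem le_runMax (hγ : IsStdBMVec 4 P γ) {ω : Ω} {a b : ℝ} (ha : 0 ≤ a) (hab : a ≤ b) :
    sqBessel4 γ a ω ≤ runMax (sqBessel4 γ) b ω := by
  have hb : BddAbove (range fun s : Icc (0:ℝ) b => sqBessel4 γ s ω) := by
    have := (isCompact_Icc (a := (0:ℝ)) (b := b)).bddAbove_image (U_cont hγ ω).continuousOn
    refine this.mono ?_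
    rintro _ ⟨s, rfl⟩
    exact ⟨s, s.2, rfl⟩
  exact le_ciSup hb (⟨a, ha, hab⟩ : Icc (0:ℝ) b)

theorem runMax_attained (hγ : IsStdBMVec 4 P γ) {ω : Ω} {b : ℝ} (hb : 0 ≤ b) :
    ∃ a ∈ Icc (0:ℝ) b, runMax (sqBessel4 γ) b ω ≤ sqBessel4 γ a ω := by
  obtain ⟨a, ha, hm⟩ := (isCompact_Icc (a := (0:ℝ)) (b := b)).exists_isMaxOn
    ⟨0, le_rfl, hb⟩ (U_cont hγ ω).continuousOn
  have : Nonempty (Icc (0:ℝ) b) := ⟨⟨0, le_rfl, hb⟩⟩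
  exact ⟨a, ha, ciSup_le fun s => hm s.2⟩

theorem Et_of_lt (hγ : IsStdBMVec 4 P γ) {ω : Ω} {t : ℝ}
    (ht : t < ddTime 1 (sqBessel4 γ) ω) : ω ∈ Et γ t := by
  intro a b ha hab hbt
  by_contra h
  have hbd : BddBelow {t | 0 ≤ t ∧ 1 ≤ runMax (sqBessel4 γ) t ω - sqBessel4 γ t ω} :=
    ⟨0, fun x hx => hx.1⟩
  have := csInf_le hbd (show b ∈ {t | 0 ≤ t ∧ 1 ≤ runMax (sqBessel4 γ) t ω - sqBessel4 γ t ω} from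
    ⟨ha.trans hab, by have := le_runMax hγ (ω := ω) ha hab; linarith [not_lt.1 h]⟩)
  unfold ddTime at ht
  linarith

theorem le_of_Et (hγ : IsStdBMVec 4 P γ) {ω : Ω} {t : ℝ} (h : ω ∈ Et γ t)
    (hne : ∃ s, ω ∉ Et γ s) : t ≤ ddTime 1 (sqBessel4 γ) ω := by
  unfold ddTime
  refine le_csInf ?_ ?_
  · obtain ⟨s, hs⟩ := hne
    have hs' : ¬ NoDD (fun s => sqBessel4 γ s ω) s := hs
    unfold NoDD at hs'
    push Not at hs'
    obtain ⟨a, b, ha, hab, hb, h1⟩ := hs'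
    exact ⟨b, ha.trans hab, by have := le_runMax hγ (ω := ω) ha hab; linarith⟩
  · rintro b ⟨hb0, hb⟩
    by_contra hlt
    rw [not_le] at hlt
    obtain ⟨a, ha, ha2⟩ := runMax_attained hγ (ω := ω) hb0
    have := h a b ha.1 ha.2 hlt.le
    simp only at this
    linarith

/-! #### probability of no drawdown -/

/-- sign -/
noncomputable def sg (x : ℝ) : ℝ := if 0 ≤ x then 1 else -1

theorem sg_meas : Measurable sg :=
  Measurable.ite measurableSet_Ici measurable_const measurable_const

theorem sg_mul (x : ℝ) : 0 ≤ sg x * x := by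
  unfold sg; split_ifs with h
  · simpa using h
  · linarith

theorem sg_sq (x : ℝ) : sg x * sg x = 1 := by unfold sg; split_ifs <;> norm_num

theorem cond_low (hγ : IsStdBMVec 4 P γ) {s t : ℝ} (hs : 0 ≤ s) (hst : s ≤ t) {E : Set Ω}
    (hE : MeasurableSet[pastF γ s] E) {X : Ω → Fin 4 → ℝ} (hX : Measurable[pastF γ s] X)
    {R : Set ((Fin 4 → ℝ) × (Fin 4 → ℝ))} (hR : MeasurableSet R) {c : ℝ≥0∞}
    (hc : ∀ x, c ≤ gau (t - s) {z | (x, z) ∈ R}) :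
    c * P E ≤ P (E ∩ {ω | (X ω, incr γ s t ω) ∈ R}) := by
  classical
  let Y : Ω → ℝ × (Fin 4 → ℝ) := fun ω => (E.indicator (fun _ => (1:ℝ)) ω, X ω)
  have hY : Measurable[pastF γ s] Y := by
    have h1 : Measurable[pastF γ s] (E.indicator (fun _ => (1:ℝ))) :=
      (@measurable_const _ _ _ (pastF γ s) (1:ℝ)).indicator hE
    exact h1.prodMk hX
  have hY' : Measurable Y := hY.mono (pastF_le hγ s) le_rfl
  have hEm : MeasurableSet E := pastF_le hγ s _ hE
  have hlaw := law_prod hγ hs hst hY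
  let S : Set ((ℝ × (Fin 4 → ℝ)) × (Fin 4 → ℝ)) := {p | p.1.1 = 1 ∧ (p.1.2, p.2) ∈ R}
  have hS : MeasurableSet S := by
    refine MeasurableSet.inter ?_ ?_
    · exact measurableSet_eq_fun (by fun_prop) measurable_const
    · exact (measurable_fst.snd.prodMk measurable_snd) hR
  have e1 : P (E ∩ {ω | (X ω, incr γ s t ω) ∈ R}) =
      (P.map fun ω => (Y ω, incr γ s t ω)) S := by
    rw [Measure.map_apply (hY'.prodMk (meas_incr hγ s t)) hS]
    congr 1
    ext ω
    by_cases h : ω ∈ E <;> simp [S, Y, h]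
  rw [e1, hlaw, Measure.prod_apply hS]
  have e2 : P E = (P.map Y) {y | y.1 = 1} := by
    rw [Measure.map_apply hY' (measurableSet_eq_fun measurable_fst measurable_const)]
    congr 1
    ext ω
    by_cases h : ω ∈ E <;> simp [Y, h]
  rw [e2, ← setLIntegral_const]
  rw [← lintegral_indicator (measurableSet_eq_fun measurable_fst measurable_const)]
  refine lintegral_mono fun y => ?_
  by_cases hy : y.1 = 1
  · rw [indicator_of_mem (by exact hy)]
    refine (hc y.2).trans (le_of_eq ?_)
    congr 1
    ext z
    simp [S, hy]
  · rw [indicator_of_notMem (by exact hy)]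
    exact bot_le

theorem gau_pos {a b : ℝ} (hab : a < b) : 0 < gaussianReal 0 1 (Ioo a b) := by
  rw [pos_iff_ne_zero]
  intro h
  have := gaussianReal_absolutelyContinuous' 0 (v := 1) one_ne_zero h
  rw [Real.volume_Ioo] at this
  simp at this
  linarith

/-- signed box -/
def Rl (a b : ℝ) : Set ((Fin 4 → ℝ) × (Fin 4 → ℝ)) :=
  {p | ∀ i, a < sg (p.1 i) * p.2 i ∧ sg (p.1 i) * p.2 i < b}

theorem Rl_meas (a b : ℝ) : MeasurableSet (Rl a b) := by
  have : Rl a b = ⋂ i, {p | a < sg (p.1 i) * p.2 i ∧ sg (p.1 i) * p.2 i < b} := by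
    ext p; simp [Rl]
  rw [this]
  refine MeasurableSet.iInter fun i => ?_
  have hf : Measurable fun p : (Fin 4 → ℝ) × (Fin 4 → ℝ) => sg (p.1 i) * p.2 i :=
    (sg_meas.comp (by fun_prop)).mul (by fun_prop)
  exact MeasurableSet.inter (measurableSet_lt measurable_const hf)
    (measurableSet_lt hf measurable_const)

theorem Rl_low {a b : ℝ} (hab : a < b) : ∃ c : ℝ≥0∞, 0 < c ∧ ∀ h : ℝ, h = 1 → ∀ x,
    c ≤ gau h {z | (x, z) ∈ Rl a b} := by
  refine ⟨(min (gaussianReal 0 1 (Ioo a b)) (gaussianReal 0 1 (Ioo (-b) (-a)))) ^ 4, ?_, ?_⟩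
  · have := lt_min (gau_pos hab) (gau_pos (neg_lt_neg hab))
    exact pos_iff_ne_zero.2 (pow_ne_zero 4 this.ne')
  · rintro h rfl x
    have e : {z | (x, z) ∈ Rl a b} =
        Set.pi univ fun i => if 0 ≤ x i then Ioo a b else Ioo (-b) (-a) := by
      ext z
      simp only [Rl, mem_ofPred_eq, Set.mem_pi, mem_univ, forall_const]
      refine forall_congr' fun i => ?_
      unfold sg
      split_ifs
      · simp
      · simp only [mem_Ioo]
        constructor <;> rintro ⟨h1, h2⟩ <;> constructor <;> linarith
    rw [e, gau, Measure.pi_pi, Real.toNNReal_one]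
    calc _ = ∏ i : Fin 4, min (gaussianReal 0 1 (Ioo a b)) (gaussianReal 0 1 (Ioo (-b) (-a))) := by
          simp
      _ ≤ _ := by
        refine Finset.prod_le_prod' fun i _ => ?_
        split_ifs
        · exact min_le_left _ _
        · exact min_le_right _ _

theorem two_step (hγ : IsStdBMVec 4 P γ) : ∃ c : ℝ≥0∞, 0 < c ∧ ∀ t, 0 ≤ t →
    c * P (Et γ t) ≤ P (Et γ t \ Et γ (t + 2)) := by
  obtain ⟨c1, hc1, H1⟩ := Rl_low (show (2:ℝ) < 3 by norm_num)
  obtain ⟨c2, hc2, H2⟩ := Rl_low (show (-1:ℝ) < -1/2 by norm_num)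
  refine ⟨c2 * c1, ENNReal.mul_pos hc2.ne' hc1.ne', fun t ht => ?_⟩
  let X : Ω → Fin 4 → ℝ := fun ω i => γ t ω i
  have hX : Measurable[pastF γ t] X := piF fun i => meas_pastF ht le_rfl i
  have s1 := cond_low hγ ht (show t ≤ t + 1 by linarith) (Et_measF hγ ht) hX (Rl_meas 2 3)
    (H1 (t + 1 - t) (by ring))
  set G := Et γ t ∩ {ω | (X ω, incr γ t (t + 1) ω) ∈ Rl 2 3} with hG
  have hGm : MeasurableSet[pastF γ (t + 1)] G := by
    have h1 : MeasurableSet[pastF γ (t + 1)] (Et γ t) :=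
      pastF_mono (show t ≤ t + 1 by linarith) _ (Et_measF hγ ht)
    have h2 : Measurable[pastF γ (t + 1)] fun ω => (X ω, incr γ t (t + 1) ω) := by
      have ha : Measurable[pastF γ (t + 1)] X := piF fun i => meas_pastF ht (by linarith) i
      have hb : Measurable[pastF γ (t + 1)] (incr γ t (t + 1)) := piF fun i =>
        subF (meas_pastF (by linarith) le_rfl i) (meas_pastF ht (by linarith) i)
      exact ha.prodMk hb
    exact MeasurableSet.inter h1 (h2 (Rl_meas 2 3))
  have s2 := cond_low hγ (show 0 ≤ t + 1 by linarith) (show t + 1 ≤ t + 2 by linarith) hGm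
    (show Measurable[pastF γ (t + 1)] X from piF fun i => meas_pastF ht (by linarith) i)
    (Rl_meas (-1) (-1/2)) (H2 (t + 2 - (t + 1)) (by ring))
  calc c2 * c1 * P (Et γ t) = c2 * (c1 * P (Et γ t)) := mul_assoc _ _ _
    _ ≤ c2 * P G := by gcongr
    _ ≤ _ := s2
    _ ≤ _ := by
      refine measure_mono ?_
      rintro ω ⟨⟨h1, h2⟩, h3⟩
      refine ⟨h1, fun h4 => ?_⟩
      have h5 := h4 (t + 1) (t + 2) (by linarith) (by linarith) le_rfl
      simp only [U_eq] at h5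
      rw [← Finset.sum_sub_distrib] at h5
      have h6 : ∀ i ∈ Finset.univ, (1:ℝ) ≤ γ (t + 1) ω i ^ 2 - γ (t + 2) ω i ^ 2 := by
        intro i _
        have a1 := (h2 i).1
        have a2 := h3 i
        have a3 := sg_mul (γ t ω i)
        have a4 := sg_sq (γ t ω i)
        simp only [X, incr] at a1 a2
        set σ := sg (γ t ω i)
        have b1 : 2 < σ * γ (t + 1) ω i := by linarith
        have e1 : γ (t + 1) ω i ^ 2 = (σ * γ (t + 1) ω i) ^ 2 := by
          rw [mul_pow, pow_two σ, a4, one_mul]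
        have e2 : γ (t + 2) ω i ^ 2 = (σ * γ (t + 2) ω i) ^ 2 := by
          rw [mul_pow, pow_two σ, a4, one_mul]
        rw [e1, e2]
        have a5 := a2.1
        have a6 := a2.2
        rw [mul_sub] at a5 a6
        nlinarith
      have h7 := Finset.sum_le_sum h6
      simp only [Finset.sum_const, Finset.card_univ, Fintype.card_fin, nsmul_eq_mul] at h7
      push_cast at h7
      linarith

theorem Et_decay (hγ : IsStdBMVec 4 P γ) : ∃ ρ : ℝ, 0 < ρ ∧ ρ < 1 ∧ ∀ n : ℕ,
    P.real (Et γ (2 * n)) ≤ ρ ^ (2 * n) := by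
  obtain ⟨c, hc, H⟩ := two_step hγ
  set d : ℝ := (min c (1 / 2)).toReal with hd
  have hfin : min c (1 / 2 : ℝ≥0∞) ≠ ∞ := ((min_le_right _ _).trans_lt (by simp)).ne
  have hd0 : 0 < d := ENNReal.toReal_pos (lt_min hc (by simp)).ne' hfin
  have hd1 : d ≤ 1 / 2 := by
    have := ENNReal.toReal_mono (by simp) (min_le_right c (1 / 2 : ℝ≥0∞))
    rw [hd]; simpa using this
  refine ⟨√(1 - d), Real.sqrt_pos.2 (by linarith), ?_, fun n => ?_⟩
  · rw [Real.sqrt_lt' one_pos]; linarith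
  rw [pow_mul, Real.sq_sqrt (by linarith)]
  induction n with
  | zero => simpa using measureReal_le_one
  | succ n ih =>
    have h1 := H (2 * n) (by positivity)
    have h2 : d * P.real (Et γ (2 * n)) ≤ P.real (Et γ (2 * n) \ Et γ (2 * n + 2)) := by
      rw [hd, Measure.real, Measure.real, ← ENNReal.toReal_mul]
      refine ENNReal.toReal_mono (measure_ne_top _ _) (le_trans ?_ h1)
      gcongr; exact min_le_left _ _
    have h3 := measureReal_sdiff_add_inter (μ := P) (s := Et γ (2 * n))
      (Et_meas hγ (t := 2 * n + 2) (by positivity))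
    rw [inter_eq_right.2 (Et_anti (by linarith))] at h3
    have e : (2 * ((n + 1 : ℕ) : ℝ)) = 2 * n + 2 := by push_cast; ring
    rw [e, pow_succ]
    nlinarith

theorem exists_notMem_Et (hγ : IsStdBMVec 4 P γ) : ∀ᵐ ω ∂P, ∃ s, ω ∉ Et γ s := by
  obtain ⟨ρ, h0, h1, H⟩ := Et_decay hγ
  rw [ae_iff]
  push Not
  have : P.real {a | ∀ s, a ∈ Et γ s} = 0 := by
    refine le_antisymm ?_ measureReal_nonneg
    have ht : Tendsto (fun n : ℕ => ρ ^ (2 * n)) atTop (nhds 0) := by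
      simp_rw [pow_mul]
      exact tendsto_pow_atTop_nhds_zero_of_lt_one (by positivity) (by nlinarith)
    refine ge_of_tendsto' ht fun n => ?_
    exact (measureReal_mono (show {a | ∀ s, a ∈ Et γ s} ⊆ Et γ (2 * n) from
      fun ω (hω : ∀ s, ω ∈ Et γ s) => hω _)).trans (H n)
  rw [Measure.real, ENNReal.toReal_eq_zero_iff] at this
  exact this.resolve_right (measure_ne_top _ _)

end


/-! ### Part 8: Wald identity -/

section
variable {Ω : Type*} [MeasurableSpace Ω] {P : Measure Ω} [IsProbabilityMeasure P]
variable {γ : ℝ → Ω → EuclideanSpace ℝ (Fin 4)}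

theorem vitali_L2 {f : ℕ → Ω → ℝ} {g : Ω → ℝ} (hf : ∀ k, ML P (f k)) {C : ℝ} (hC : 0 ≤ C)
    (hb : ∀ k, ∫ ω, f k ω ^ 2 ∂P ≤ C)
    (hlim : ∀ᵐ ω ∂P, Tendsto (fun k => f k ω) atTop (nhds (g ω))) :
    Integrable g P ∧ Tendsto (fun k => ∫ ω, f k ω ∂P) atTop (nhds (∫ ω, g ω ∂P)) := by
  have hI : ∀ k, Integrable (f k) P := fun k => (hf k).integrable
  have hui : UniformIntegrable f 1 P := by
    refine uniformIntegrable_of le_rfl (by simp) (fun k => (hI k).1) fun ε hε => ?_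
    have hM : 0 < C / ε + 1 := by positivity
    refine ⟨⟨C / ε + 1, hM.le⟩, fun k => ?_⟩
    rw [eLpNorm_one_eq_lintegral_enorm]
    calc _ ≤ ∫⁻ ω, ENNReal.ofReal (f k ω ^ 2 / (C / ε + 1)) ∂P := by
          refine lintegral_mono fun ω => ?_
          simp only [indicator]
          split_ifs with h
          · rw [← ofReal_norm_eq_enorm]
            refine ENNReal.ofReal_le_ofReal ?_
            have h' : C / ε + 1 ≤ ‖f k ω‖ := h
            rw [le_div_iff₀ hM, ← sq_abs, ← Real.norm_eq_abs]
            nlinarith [norm_nonneg (f k ω)]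
          · simp
      _ = ENNReal.ofReal (∫ ω, f k ω ^ 2 / (C / ε + 1) ∂P) := by
          rw [ofReal_integral_eq_lintegral_ofReal]
          · exact ((hf k).sq.integrable).div_const _
          · exact Eventually.of_forall fun ω => by positivity
      _ ≤ ENNReal.ofReal ε := by
          refine ENNReal.ofReal_le_ofReal ?_
          rw [integral_div, div_le_iff₀ hM]
          refine (hb k).trans ?_
          rw [mul_add, mul_div_cancel₀ _ hε.ne']; linarith
  have hg := hui.integrable_of_ae_tendsto hlim
  refine ⟨hg, tendsto_integral_of_L1' g hg.1 (Eventually.of_forall hI) ?_⟩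
  exact tendsto_Lp_finite_of_tendsto_ae le_rfl (by simp) (fun k => (hI k).1)
    (memLp_one_iff_integrable.2 hg) hui.2.1 hlim

theorem block_sum {F G : ℕ → ℝ} (m N : ℕ) (H : ∀ a b, b < m → F (a * m + b) ≤ G a) :
    ∑ j ∈ Finset.range (N * m), F j ≤ m * ∑ a ∈ Finset.range N, G a := by
  induction N with
  | zero => simp
  | succ N ih =>
    rw [Nat.succ_mul, Finset.sum_range_add, Finset.sum_range_succ, mul_add]
    refine add_le_add ih ?_
    refine (Finset.sum_le_sum fun b hb => H N b (Finset.mem_range.1 hb)).trans ?_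
    simp

theorem anti_pred {p : ℕ → Prop} (hp : ∀ i j, i ≤ j → p j → p i) (J : ℕ) :
    ∃ s ≤ J, ∀ j < J, (p j ↔ j < s) := by
  induction J with
  | zero => exact ⟨0, le_rfl, fun j hj => absurd hj (by omega)⟩
  | succ J ih =>
    by_cases h : p J
    · exact ⟨J + 1, le_rfl, fun j hj => ⟨fun _ => hj, fun _ => hp j J (by omega) h⟩⟩
    · obtain ⟨s, hs, H⟩ := ih
      refine ⟨s, by omega, fun j hj => ?_⟩
      rcases Nat.lt_succ_iff_lt_or_eq.1 hj with h1 | h1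
      · exact H j h1
      · subst h1
        exact ⟨fun h2 => absurd h2 h, fun h2 => absurd h2 (by omega)⟩

theorem tele_to {e f : ℕ → ℝ} {s J : ℕ} (hs : s ≤ J) (h1 : ∀ j < s, e j = 1)
    (h0 : ∀ j < J, s ≤ j → e j = 0) :
    ∑ j ∈ Finset.range J, e j * (f (j + 1) - f j) = f s - f 0 := by
  obtain ⟨r, rfl⟩ := Nat.exists_eq_add_of_le hs
  rw [Finset.sum_range_add, Finset.sum_eq_zero (s := Finset.range r), add_zero,
    ← Finset.sum_range_sub]
  · exact Finset.sum_congr rfl fun j hj => by rw [h1 j (Finset.mem_range.1 hj), one_mul]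
  · intro j hj
    have := Finset.mem_range.1 hj
    rw [h0 (s + j) (by omega) (by omega), zero_mul]

/-- indicator of no drawdown before the `j`th grid time -/
noncomputable def ev (γ : ℝ → Ω → EuclideanSpace ℝ (Fin 4)) (h : ℝ) (j : ℕ) (ω : Ω) : ℝ :=
  (Et γ (j * h)).indicator (fun _ => (1:ℝ)) ω

theorem ev_measF (hγ : IsStdBMVec 4 P γ) {h : ℝ} (hh : 0 ≤ h) (j : ℕ) :
    Measurable[pastF γ (j * h)] (ev γ h j) :=
  (@measurable_const _ _ _ (pastF γ (j * h)) (1:ℝ)).indicator (Et_measF hγ (by positivity))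

theorem ev_ML (hγ : IsStdBMVec 4 P γ) {h : ℝ} (hh : 0 ≤ h) (j : ℕ) : ML P (ev γ h j) :=
  ML.indicator (Et_meas hγ (by positivity))

theorem ev_nonneg (h : ℝ) (j : ℕ) (ω : Ω) : 0 ≤ ev γ h j ω :=
  indicator_nonneg (fun _ _ => zero_le_one) _

theorem ev_le (h : ℝ) (j : ℕ) (ω : Ω) : ev γ h j ω ≤ 1 := by
  unfold ev indicator; split_ifs <;> norm_num

theorem ev_int (hγ : IsStdBMVec 4 P γ) {h : ℝ} (hh : 0 ≤ h) (j : ℕ) :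
    ∫ ω, ev γ h j ω ∂P = P.real (Et γ (j * h)) :=
  integral_indicator_one (Et_meas hγ (by positivity))

theorem path {h : ℝ} (hh : 0 ≤ h) (J : ℕ) (ω : Ω) :
    ∃ s ≤ J, (∀ j < J, (ω ∈ Et γ (j * h) ↔ j < s)) ∧ ∀ f : ℕ → ℝ,
      ∑ j ∈ Finset.range J, ev γ h j ω * (f (j + 1) - f j) = f s - f 0 := by
  obtain ⟨s, hs, H⟩ := anti_pred (p := fun j : ℕ => ω ∈ Et γ (j * h)) (fun i j hij hj =>
    Et_anti (by gcongr) hj) J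
  refine ⟨s, hs, H, fun f => tele_to hs (fun j hj => ?_) fun j hj hsj => ?_⟩
  · exact indicator_of_mem ((H j (by omega)).2 hj) _
  · exact indicator_of_notMem (fun hm => by have := (H j hj).1 hm; omega) _

/-- Discretized stopping time. -/
noncomputable def TT (γ : ℝ → Ω → EuclideanSpace ℝ (Fin 4)) (h : ℝ) (J : ℕ) (ω : Ω) : ℝ :=
  ∑ j ∈ Finset.range J, ev γ h j ω * (((j + 1 : ℕ) : ℝ) * h - (j : ℝ) * h)

theorem TT_spec (hγ : IsStdBMVec 4 P γ) {h : ℝ} (hh : 0 ≤ h) (J : ℕ) (ω : Ω) :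
    TT γ h J ω ^ 2 = ∑ j ∈ Finset.range J, ev γ h j ω *
        ((((j + 1 : ℕ) : ℝ) * h) ^ 2 - ((j : ℝ) * h) ^ 2) ∧
    sqBessel4 γ (TT γ h J ω) ω = ∑ j ∈ Finset.range J, ev γ h j ω *
        (sqBessel4 γ (((j + 1 : ℕ) : ℝ) * h) ω - sqBessel4 γ ((j : ℝ) * h) ω) ∧
    sqBessel4 γ (TT γ h J ω) ω ^ 2 = ∑ j ∈ Finset.range J, ev γ h j ω *
        (sqBessel4 γ (((j + 1 : ℕ) : ℝ) * h) ω ^ 2 - sqBessel4 γ ((j : ℝ) * h) ω ^ 2) := by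
  obtain ⟨s, hs, -, H⟩ := path (γ := γ) hh J ω
  have e : TT γ h J ω = s * h := by
    unfold TT
    rw [H fun j => (j : ℝ) * h]; simp
  rw [H fun j => ((j : ℝ) * h) ^ 2, H fun j => sqBessel4 γ ((j : ℝ) * h) ω,
    H fun j => sqBessel4 γ ((j : ℝ) * h) ω ^ 2, e]
  simp [U_zero hγ ω]

theorem TT_bounds (hγ : IsStdBMVec 4 P γ) {h : ℝ} (hh : 0 ≤ h) (J : ℕ) {ω : Ω}
    (hne : ∃ s, ω ∉ Et γ s) : min (J * h) (ddTime 1 (sqBessel4 γ) ω) ≤ TT γ h J ω ∧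
      TT γ h J ω ≤ ddTime 1 (sqBessel4 γ) ω + h := by
  obtain ⟨s, hs, K, H⟩ := path (γ := γ) hh J ω
  have e : TT γ h J ω = s * h := by
    unfold TT
    rw [H fun j => (j : ℝ) * h]; simp
  have h0 : 0 ≤ ddTime 1 (sqBessel4 γ) ω := Real.sInf_nonneg fun x hx => hx.1
  rw [e]
  constructor
  · rcases hs.eq_or_lt with h1 | h1
    · rw [h1]; exact min_le_left _ _
    · refine (min_le_right _ _).trans ?_
      by_contra hc
      have := (K s h1).1 (Et_of_lt hγ (not_le.1 hc))
      omega
  · rcases s with _ | s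
    · simp; linarith
    · have := le_of_Et hγ ((K s (by omega)).2 (by omega)) hne
      push_cast
      linarith

theorem TT_ML (hγ : IsStdBMVec 4 P γ) {h : ℝ} (hh : 0 ≤ h) (J : ℕ) : ML P (TT γ h J) :=
  ML.sum _ fun j _ => (ev_ML hγ hh j).mul (ML.const _)

theorem UT_ML (hγ : IsStdBMVec 4 P γ) {h : ℝ} (hh : 0 ≤ h) (J : ℕ) :
    ML P (fun ω => sqBessel4 γ (TT γ h J ω) ω) := by
  have : (fun ω => sqBessel4 γ (TT γ h J ω) ω) = fun ω => ∑ j ∈ Finset.range J, ev γ h j ω *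
        (sqBessel4 γ (((j + 1 : ℕ) : ℝ) * h) ω - sqBessel4 γ ((j : ℝ) * h) ω) :=
    funext fun ω => (TT_spec hγ hh J ω).2.1
  rw [this]
  exact ML.sum _ fun j _ => (ev_ML hγ hh j).mul
    ((ML_U hγ (by positivity)).sub (ML_U hγ (by positivity)))

theorem wald_disc (hγ : IsStdBMVec 4 P γ) {h : ℝ} (hh : 0 ≤ h) (J : ℕ) :
    ∫ ω, sqBessel4 γ (TT γ h J ω) ω ∂P = 4 * ∫ ω, TT γ h J ω ∂P := by
  simp_rw [(TT_spec hγ hh J _).2.1]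
  unfold TT
  rw [integral_finsetSum _ fun j _ => ((ev_ML hγ hh j).mul
    ((ML_U hγ (by positivity)).sub (ML_U hγ (by positivity)))).integrable,
    integral_finsetSum _ fun j _ => ((ev_ML hγ hh j).mul (ML.const _)).integrable,
    Finset.mul_sum]
  refine Finset.sum_congr rfl fun j _ => ?_
  rw [moment1 hγ (by positivity) (by gcongr; omega) (ev_measF hγ hh j) (ev_ML hγ hh j),
    integral_mul_const]
  ring

theorem EU_bound (hγ : IsStdBMVec 4 P γ) {ρ : ℝ} (h0 : 0 < ρ)
    (H : ∀ n : ℕ, P.real (Et γ (2 * n)) ≤ ρ ^ (2 * n)) {h : ℝ} (hh : 0 ≤ h) {j a : ℕ}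
    (h1 : 2 * (a : ℝ) ≤ j * h) (h2 : j * h ≤ 2 * (a + 1)) :
    ∫ ω, ev γ h j ω ∂P ≤ ρ ^ (2 * a) ∧
    ∫ ω, ev γ h j ω * sqBessel4 γ (j * h) ω ∂P ≤ (1 + 4 * c4) * ((a + 1) ^ 2 * ρ ^ a) := by
  have p1 : ∫ ω, ev γ h j ω ∂P ≤ ρ ^ (2 * a) := by
    rw [ev_int hγ hh]
    exact (measureReal_mono (Et_anti h1)).trans (H a)
  refine ⟨p1, ?_⟩
  have hj : 0 ≤ (j : ℝ) * h := by positivity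
  have hpa : 0 < ρ ^ a := by positivity
  calc _ ≤ ∫ ω, ((ρ ^ a)⁻¹ * ev γ h j ω + ρ ^ a * sqBessel4 γ (j * h) ω ^ 2) ∂P := by
        refine integral_mono ((ev_ML hγ hh j).mul (ML_U hγ hj)).integrable
          (((ML.const _).mul (ev_ML hγ hh j)).add
            ((ML.const _).mul (ML_U hγ hj).sq)).integrable fun ω => ?_
        simp only
        have e0 := ev_nonneg (γ := γ) h j ω
        have e1 := ev_le (γ := γ) h j ω
        set e := ev γ h j ω
        set u := sqBessel4 γ (j * h) ω
        have hu : 0 ≤ u := U_nonneg _ _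
        have hz : (ρ ^ a)⁻¹ * ρ ^ a = 1 := inv_mul_cancel₀ hpa.ne'
        set x := ρ ^ a
        set y := x⁻¹
        have hy : 0 < y := inv_pos.2 hpa
        have k1 : e * u ≤ e * (y + x * u ^ 2) := by
          refine mul_le_mul_of_nonneg_left ?_ e0
          have : 0 ≤ y * (1 - x * u) ^ 2 := by positivity
          have e3 : y * (1 - x * u) ^ 2 = y - 2 * (y * x) * u + (y * x) * x * u ^ 2 := by ring
          rw [e3, hz] at this
          nlinarith
        have k2 : e * (x * u ^ 2) ≤ 1 * (x * u ^ 2) :=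
          mul_le_mul_of_nonneg_right e1 (by positivity)
        nlinarith
    _ = (ρ ^ a)⁻¹ * ∫ ω, ev γ h j ω ∂P + ρ ^ a * ∫ ω, sqBessel4 γ (j * h) ω ^ 2 ∂P := by
        rw [integral_add ((ML.const _).mul (ev_ML hγ hh j)).integrable
            ((ML.const _).mul (ML_U hγ hj).sq).integrable, integral_const_mul, integral_const_mul]
    _ ≤ (ρ ^ a)⁻¹ * ρ ^ (2 * a) + ρ ^ a * (c4 * (2 * (a + 1)) ^ 2) := by
        have := c4_nonneg
        gcongr
        refine (E_U_sq hγ hj).trans ?_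
        gcongr
    _ ≤ _ := by
        have e : (ρ ^ a)⁻¹ * ρ ^ (2 * a) = ρ ^ a := by
          rw [two_mul, pow_add, ← mul_assoc, inv_mul_cancel₀ hpa.ne', one_mul]
        rw [e]
        have : (1:ℝ) ≤ (a + 1) ^ 2 := by nlinarith [(Nat.cast_nonneg a : (0:ℝ) ≤ a)]
        nlinarith

/-- mesh -/
noncomputable def hm (k : ℕ) : ℝ := 1 / ((k : ℝ) + 1)

theorem hm_pos (k : ℕ) : 0 < hm k := by unfold hm; positivity
theorem hm_le (k : ℕ) : hm k ≤ 1 := by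
  unfold hm; rw [div_le_one (by positivity)]; linarith [(Nat.cast_nonneg k : (0:ℝ) ≤ k)]

theorem hm_mul (k : ℕ) : ((2 * (k + 1) : ℕ) : ℝ) * hm k = 2 := by
  unfold hm; push_cast; field_simp

theorem second_moments (hγ : IsStdBMVec 4 P γ) : ∃ C : ℝ, 0 ≤ C ∧ ∀ k : ℕ,
    (∫ ω, TT γ (hm k) ((k + 1) * (2 * (k + 1))) ω ^ 2 ∂P ≤ C) ∧
    (∫ ω, sqBessel4 γ (TT γ (hm k) ((k + 1) * (2 * (k + 1))) ω) ω ^ 2 ∂P ≤ C) := by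
  obtain ⟨ρ, h0, h1, H⟩ := Et_decay hγ
  have hc := c4_nonneg
  have hsum : Summable fun a : ℕ => ((a : ℝ) + 1) ^ 2 * ρ ^ a := by
    have hr : ‖ρ‖ < 1 := by rw [Real.norm_of_nonneg h0.le]; exact h1
    have s2 := summable_pow_mul_geometric_of_norm_lt_one 2 hr
    have s1 := summable_pow_mul_geometric_of_norm_lt_one 1 hr
    have s0 := summable_pow_mul_geometric_of_norm_lt_one 0 hr
    refine ((s2.add (s1.mul_left 2)).add s0).congr fun a => ?_
    ring
  set S := ∑' a : ℕ, ((a : ℝ) + 1) ^ 2 * ρ ^ a with hS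
  have hS0 : 0 ≤ S := tsum_nonneg fun a => by positivity
  set K : ℝ := 40 * (1 + 4 * c4) + 2 * c4 + 4 with hK
  have hK0 : 0 ≤ K := by positivity
  have main : ∀ (k : ℕ) (F : ℕ → ℝ), (∀ a j : ℕ, 2 * (a : ℝ) ≤ j * hm k →
      ((j : ℝ) + 1) * hm k ≤ 2 * (a + 1) → F j ≤ hm k * K * (((a : ℝ) + 1) ^ 2 * ρ ^ a)) →
      ∑ j ∈ Finset.range ((k + 1) * (2 * (k + 1))), F j ≤ 2 * K * S := by
    intro k F hF
    have hk := hm_pos k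
    have hkm := hm_mul k
    refine (block_sum (2 * (k + 1)) (k + 1)
      (G := fun a => hm k * K * (((a : ℝ) + 1) ^ 2 * ρ ^ a)) fun a b hb => ?_).trans ?_
    · have hb' : (b : ℝ) + 1 ≤ ((2 * (k + 1) : ℕ) : ℝ) := by exact_mod_cast hb
      have hb2 := mul_le_mul_of_nonneg_right hb' hk.le
      have hb3 : 0 ≤ (b : ℝ) * hm k := by positivity
      have e : ((a * (2 * (k + 1)) + b : ℕ) : ℝ) * hm k = 2 * a + b * hm k := by
        rw [Nat.cast_add, Nat.cast_mul, add_mul, mul_assoc, hkm]; ring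
      apply hF
      · rw [e]; linarith
      · rw [add_mul, e]; linarith
    · rw [← Finset.mul_sum, ← mul_assoc, ← mul_assoc, hkm]
      exact mul_le_mul_of_nonneg_left (hsum.sum_le_tsum _ fun a _ => by positivity) (by positivity)
  have hpow : ∀ a : ℕ, ρ ^ (2 * a) ≤ ((a : ℝ) + 1) ^ 2 * ρ ^ a := by
    intro a
    have l1 : ρ ^ (2 * a) ≤ ρ ^ a := pow_le_pow_of_le_one h0.le h1.le (by omega)
    have l2 : (1:ℝ) ≤ ((a : ℝ) + 1) ^ 2 := by nlinarith [(Nat.cast_nonneg a : (0:ℝ) ≤ a)]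
    have l3 : 0 ≤ ρ ^ a := by positivity
    nlinarith
  have hpow' : ∀ a : ℕ, ((a : ℝ) + 1) * ρ ^ (2 * a) ≤ ((a : ℝ) + 1) ^ 2 * ρ ^ a := by
    intro a
    have l1 : ρ ^ (2 * a) ≤ ρ ^ a := pow_le_pow_of_le_one h0.le h1.le (by omega)
    have l2 : ((a : ℝ) + 1) ≤ ((a : ℝ) + 1) ^ 2 := by nlinarith [(Nat.cast_nonneg a : (0:ℝ) ≤ a)]
    gcongr
  refine ⟨2 * K * S, by positivity, fun k => ⟨?_, ?_⟩⟩
  · have hk := hm_pos k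
    simp_rw [(TT_spec hγ hk.le _ _).1]
    rw [integral_finsetSum _ fun j _ => ((ev_ML hγ hk.le j).mul (ML.const _)).integrable]
    refine main k _ fun a j ha hb => ?_
    have hb' : (j : ℝ) * hm k ≤ 2 * (a + 1) := by linarith
    obtain ⟨b1, -⟩ := EU_bound hγ h0 H hk.le ha hb'
    rw [integral_mul_const]
    have e : (((j + 1 : ℕ) : ℝ) * hm k) ^ 2 - ((j : ℝ) * hm k) ^ 2 ≤ hm k * (4 * (a + 1)) := by
      push_cast
      nlinarith
    have e0 : 0 ≤ ∫ ω, ev γ (hm k) j ω ∂P := integral_nonneg fun ω => ev_nonneg _ _ _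
    calc _ ≤ (∫ ω, ev γ (hm k) j ω ∂P) * (hm k * (4 * (a + 1))) :=
          mul_le_mul_of_nonneg_left e e0
      _ ≤ ρ ^ (2 * a) * (hm k * (4 * (a + 1))) := by gcongr
      _ = hm k * 4 * (((a : ℝ) + 1) * ρ ^ (2 * a)) := by ring
      _ ≤ hm k * K * (((a : ℝ) + 1) ^ 2 * ρ ^ a) := by
          have : 4 ≤ K := by rw [hK]; linarith
          have := hpow' a
          gcongr
  · have hk := hm_pos k
    have hk1 := hm_le k
    simp_rw [(TT_spec hγ hk.le _ _).2.2]
    rw [integral_finsetSum _ fun j _ => ((ev_ML hγ hk.le j).mul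
      ((ML_U hγ (by positivity)).sq.sub (ML_U hγ (by positivity)).sq)).integrable]
    refine main k _ fun a j ha hb => ?_
    have hb' : (j : ℝ) * hm k ≤ 2 * (a + 1) := by linarith
    obtain ⟨b1, b2⟩ := EU_bound hγ h0 H hk.le ha hb'
    refine (moment2 hγ (by positivity) (by gcongr; omega) (ev_measF hγ hk.le j)
      (ev_ML hγ hk.le j) (ev_nonneg _ _)).trans ?_
    have e : ((j + 1 : ℕ) : ℝ) * hm k - (j : ℝ) * hm k = hm k := by push_cast; ring
    rw [e]
    have hp := hpow a
    have hsq : hm k ^ 2 ≤ hm k := by nlinarith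
    set Q := ((a : ℝ) + 1) ^ 2 * ρ ^ a
    have hQ : 0 ≤ Q := by positivity
    calc _ ≤ 40 * hm k * ((1 + 4 * c4) * Q) + 2 * c4 * hm k * Q := by
          have := b1.trans hp
          gcongr
          exact integral_nonneg fun ω => ev_nonneg _ _ _
      _ ≤ hm k * K * Q := by
          rw [hK]
          nlinarith [mul_nonneg hk.le hQ]

theorem TT_tendsto (hγ : IsStdBMVec 4 P γ) {ω : Ω} (hne : ∃ s, ω ∉ Et γ s) :
    Tendsto (fun k => TT γ (hm k) ((k + 1) * (2 * (k + 1))) ω) atTop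
      (nhds (ddTime 1 (sqBessel4 γ) ω)) := by
  have hh : Tendsto hm atTop (nhds 0) := tendsto_one_div_add_atTop_nhds_zero_nat
  have e : ∀ k : ℕ, (((k + 1) * (2 * (k + 1)) : ℕ) : ℝ) * hm k = 2 * ((k : ℝ) + 1) := by
    intro k
    rw [Nat.cast_mul, mul_assoc, hm_mul]; push_cast; ring
  set τ := ddTime 1 (sqBessel4 γ) ω
  refine tendsto_of_tendsto_of_tendsto_of_le_of_le' (g := fun _ => τ) (h := fun k => τ + hm k)
    tendsto_const_nhds ?_ ?_ ?_
  · simpa using tendsto_const_nhds.add hh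
  · obtain ⟨n, hn⟩ := exists_nat_ge τ
    filter_upwards [eventually_ge_atTop n] with k hk
    have hb := (TT_bounds hγ (hm_pos k).le ((k + 1) * (2 * (k + 1))) hne).1
    rw [e, min_eq_right] at hb
    · exact hb
    · have : (n : ℝ) ≤ k := by exact_mod_cast hk
      show τ ≤ _
      have : (0 : ℝ) ≤ k := by positivity
      linarith
  · exact Eventually.of_forall fun k => (TT_bounds hγ (hm_pos k).le _ hne).2

theorem wald (hγ : IsStdBMVec 4 P γ) :
    Integrable (ddTime 1 (sqBessel4 γ)) P ∧
    Integrable (fun ω => sqBessel4 γ (ddTime 1 (sqBessel4 γ) ω) ω) P ∧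
    ∫ ω, sqBessel4 γ (ddTime 1 (sqBessel4 γ) ω) ω ∂P =
      4 * ∫ ω, ddTime 1 (sqBessel4 γ) ω ∂P := by
  obtain ⟨C, hC, H⟩ := second_moments hγ
  have hne := exists_notMem_Et hγ
  obtain ⟨i1, l1⟩ := vitali_L2 (fun k => TT_ML hγ (hm_pos k).le ((k + 1) * (2 * (k + 1)))) hC
    (fun k => (H k).1) (hne.mono fun ω h => TT_tendsto hγ h)
  obtain ⟨i2, l2⟩ := vitali_L2 (fun k => UT_ML hγ (hm_pos k).le ((k + 1) * (2 * (k + 1)))) hC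
    (fun k => (H k).2) (hne.mono fun ω h => ((U_cont hγ ω).tendsto _).comp (TT_tendsto hγ h))
  refine ⟨i1, i2, tendsto_nhds_unique l2 ?_⟩
  simp_rw [wald_disc hγ (hm_pos _).le]
  exact l1.const_mul 4

end

/-- Dambis–Dubins–Schwarz representation and Wald identity: there is a
standard Brownian motion `B` with `U(t) = 2 B(A(t)) + 4t` (where `A(t) := ∫₀^t U(s) ds`),
`E[B(A(τ₁^U))] = 0`, and consequently `E[τ₁^U] = (1/4) E[U(τ₁^U)]`. -/
theorem sqBessel4_dds_and_wald
    {Ω : Type*} [MeasurableSpace Ω] (P : Measure Ω) [IsProbabilityMeasure P]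
    (γ : ℝ → Ω → EuclideanSpace ℝ (Fin 4)) (hγ : IsStdBMVec 4 P γ) :
    (∃ B : ℝ → Ω → ℝ, IsStdBM P B ∧
      (∀ᵐ ω ∂P, ∀ t : ℝ, 0 ≤ t →
        sqBessel4 γ t ω = 2 * B (∫ s in (0:ℝ)..t, sqBessel4 γ s ω) ω + 4 * t) ∧
      ∫ ω, B (∫ s in (0:ℝ)..(ddTime 1 (sqBessel4 γ) ω), sqBessel4 γ s ω) ω ∂P = 0) ∧
    ∫ ω, ddTime 1 (sqBessel4 γ) ω ∂P
      = (1 / 4) * ∫ ω, sqBessel4 γ (ddTime 1 (sqBessel4 γ) ω) ω ∂P := by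
  obtain ⟨i1, i2, hw⟩ := wald hγ
  refine ⟨⟨Bd γ, Bd_isStdBM hγ, ?_, ?_⟩, by rw [hw]; ring⟩
  · filter_upwards [good_ae hγ] with ω hg t ht
    rw [Bd_clock hγ hg ht, Nn]; ring
  · have : ∫ ω, Bd γ (∫ s in (0:ℝ)..(ddTime 1 (sqBessel4 γ) ω), sqBessel4 γ s ω) ω ∂P =
        ∫ ω, (sqBessel4 γ (ddTime 1 (sqBessel4 γ) ω) ω - 4 * ddTime 1 (sqBessel4 γ) ω) / 2 ∂P := by
      refine integral_congr_ae ?_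
      filter_upwards [good_ae hγ] with ω hg
      have h0 : 0 ≤ ddTime 1 (sqBessel4 γ) ω := Real.sInf_nonneg fun x hx => hx.1
      rw [Bd_clock hγ hg h0, Nn]
    rw [this, integral_div, integral_sub i2 (i1.const_mul 4), integral_const_mul, hw]
    simp
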